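/- arXiv:1303.1378 — 5 statements merged into one kernel-verified Lean document; each statement's English description precedes it below -/
import Mathlib

section
/- Let F be a finitely generated non-abelian free group and let A be a subgroup of F such that F is freely indecomposable with respect to A. Then there exists a finitely generated subgroup A_0 of A such that A ⊆ acl_F(A_0); in particular acl_F(A) = acl_F(A_0). -/
/-!
The free group `F = F_n` is equationally Noetherian with coefficients: it embeds in `SL(2, ℤ)`, so
an endomorphism `f` of `F` is determined by an integer point (the entries of the matrices of the
`f (e_j)`), and each condition `f a = a` is a system of polynomial equations in that point. By
Hilbert's basis theorem, finitely many of the conditions `f a = a`, `a ∈ A`, imply all the others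
(`exists_finset_fixing`). Let `A₀` be generated by such a finite set `s ⊆ A`: every endomorphism
fixing `A₀` pointwise fixes `A` pointwise.

Endomorphisms of `F` correspond to `n`-tuples `x̄` of elements of `F`, so a formula `φ(y, ā)` with
parameters `ā` in `A` is equivalent to the formula
`∃ x̄, (⋀_{b ∈ s} b(x̄) = b) ∧ φ(y, ā(x̄))` with parameters in `A₀`, where `w(x̄)` denotes the
evaluation of the word `w` at `x̄`. Hence everything algebraic over `A` is algebraic over `A₀`.

The embedding in `SL(2, ℤ)` sends the `i`-th generator to the Möbius map
`z ↦ (6 i + 3) - 1 / (z - 6 i)`, which maps the exterior of the unit disc about `6 i` into the unit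
disc about `6 i + 3`; these discs being disjoint, the ping-pong lemma applies.
-/

open FirstOrder Language

universe u v w

inductive GroupFunc : ℕ → Type
  | mul : GroupFunc 2
  | inv : GroupFunc 1
  | one : GroupFunc 0

/-- The first-order language of groups. -/
def groupLang : FirstOrder.Language where
  Functions := GroupFunc
  Relations := fun _ => Empty

/-- Any group is a structure in the language of groups. -/
instance groupStructure (G : Type w) [Group G] : groupLang.Structure G where
  funMap {n} f v :=
    match f, v with
    | .mul, v => v 0 * v 1
    | .inv, v => (v 0)⁻¹
    | .one, _ => 1
  RelMap {n} r := r.elim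

/-- The algebraic closure of `A` in `M`: the set of elements of `M` satisfying some formula
with parameters in `A` which has only finitely many solutions in `M`. -/
def AclIn (L : FirstOrder.Language.{u, v}) {M : Type w} [L.Structure M] (A : Set M) : Set M :=
  {x | ∃ (m : ℕ) (φ : L.Formula (Fin 1 ⊕ Fin m)) (a : Fin m → M), (∀ i, a i ∈ A) ∧
      φ.Realize (Sum.elim (fun _ => x) a) ∧
      {y : M | φ.Realize (Sum.elim (fun _ => y) a)}.Finite}

/-- The subgroups `H i` form an internal free product decomposition of `G`:
the canonical homomorphism from their coproduct (free product) to `G` is an isomorphism. -/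
def IsFreeProduct {G : Type w} [Group G] {ι : Type} (H : ι → Subgroup G) : Prop :=
  Function.Bijective ⇑(Monoid.CoprodI.lift (fun i => (H i).subtype))

/-- `A` is a free factor of `G`. -/
def IsFreeFactor {G : Type w} [Group G] (A : Subgroup G) : Prop :=
  ∃ B : Subgroup G, IsFreeProduct ![A, B]

/-- `G` is freely indecomposable with respect to `A ⊆ G`. -/
def FreelyIndecomposableWrt {G : Type w} [Group G] (A : Set G) : Prop :=
  ∀ G₁ G₂ : Subgroup G, IsFreeProduct ![G₁, G₂] → A ⊆ ↑G₁ → G₂ = ⊥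

/-- The Möbius map `z ↦ b - 1 / (z - a)` with `a = 6 k`, `b = 6 k + 3`. -/
def schottkyGen (k : ℕ) : Matrix.SpecialLinearGroup (Fin 2) ℤ :=
  ⟨!![6 * k + 3, -1 - (6 * k) * (6 * k + 3); 1, -(6 * k)], by
    rw [Matrix.det_fin_two_of]; ring⟩

/-- Two nearby integer approximations `|x - a y| ≤ |y|`, `|x - b y| ≤ |y|` of the ratio `x : y`
force `|a - b| ≤ 2`, unless `x = y = 0`. -/
lemma eq_zero_of_abs_sub_le {x y a b : ℤ} (hab : 3 ≤ |a - b|)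
    (ha : |x - a * y| ≤ |y|) (hb : |x - b * y| ≤ |y|) : x = 0 ∧ y = 0 := by
  have h1 : |a - b| * |y| ≤ 2 * |y| := by
    rw [← abs_mul]
    calc |(a - b) * y| = |(x - b * y) - (x - a * y)| := by ring_nf
      _ ≤ |x - b * y| + |x - a * y| := abs_sub _ _
      _ ≤ 2 * |y| := by linarith
  have hy : |y| = 0 := by nlinarith [abs_nonneg y]
  have hy' : y = 0 := abs_eq_zero.mp hy
  subst hy'
  simpa using ha

lemma col_ne_zero (g : Matrix.SpecialLinearGroup (Fin 2) ℤ) : ¬ (g.1 0 0 = 0 ∧ g.1 1 0 = 0) := by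
  rintro ⟨h0, h1⟩
  have := g.2
  rw [Matrix.det_fin_two, h0, h1] at this
  simp at this

lemma schottkyGen_mul_col (k : ℕ) (g : Matrix.SpecialLinearGroup (Fin 2) ℤ) :
    (schottkyGen k * g).1 0 0 =
        (6 * k + 3) * g.1 0 0 + (-1 - (6 * k) * (6 * k + 3)) * g.1 1 0 ∧
      (schottkyGen k * g).1 1 0 = g.1 0 0 - (6 * k) * g.1 1 0 := by
  change ((schottkyGen k).1 * g.1) 0 0 = _ ∧ ((schottkyGen k).1 * g.1) 1 0 = _
  simp only [schottkyGen, Matrix.mul_apply, Fin.sum_univ_two]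
  constructor <;> simp [-mul_eq_mul_right_iff] <;> ring

lemma schottkyGen_inv_mul_col (k : ℕ) (g : Matrix.SpecialLinearGroup (Fin 2) ℤ) :
    ((schottkyGen k)⁻¹ * g).1 0 0 =
        -(6 * k) * g.1 0 0 + (1 + (6 * k) * (6 * k + 3)) * g.1 1 0 ∧
      ((schottkyGen k)⁻¹ * g).1 1 0 = -g.1 0 0 + (6 * k + 3) * g.1 1 0 := by
  change ((schottkyGen k).1.adjugate * g.1) 0 0 = _ ∧ ((schottkyGen k).1.adjugate * g.1) 1 0 = _
  simp only [schottkyGen, Matrix.adjugate_fin_two, Matrix.mul_apply, Fin.sum_univ_two]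
  constructor <;> simp [-mul_eq_mul_right_iff] <;> ring

/-- The ping-pong embedding of `F_n` in `SL(2, ℤ)`. -/
lemma lift_schottkyGen_injective {n : ℕ} (hn : 2 ≤ n) :
    Function.Injective (FreeGroup.lift fun i : Fin n => schottkyGen i) := by
  have : Nontrivial (Fin n) := Fin.nontrivial_iff_two_le.mpr hn
  -- The group acts on itself by left multiplication; membership in the ping-pong sets depends
  -- only on the first column `(x, y)`, viewed as the point `x : y` of the projective line.
  refine FreeGroup.injective_lift_of_ping_pong (fun i : Fin n => schottkyGen i)
    (α := Matrix.SpecialLinearGroup (Fin 2) ℤ)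
    (fun i => {g | |g.1 0 0 - (6 * (i : ℕ) + 3) * g.1 1 0| ≤ |g.1 1 0|})
    (fun i => {g | |g.1 0 0 - (6 * (i : ℕ)) * g.1 1 0| < |g.1 1 0|}) ?_ ?_ ?_ ?_ ?_ ?_
  · intro i
    refine ⟨schottkyGen i, ?_⟩
    change |(schottkyGen i).1 0 0 - (6 * ((i : ℕ) : ℤ) + 3) * (schottkyGen i).1 1 0| ≤
      |(schottkyGen i).1 1 0|
    simp [schottkyGen]
  · intro i j hij
    refine Set.disjoint_left.mpr fun g h1 h2 => col_ne_zero g (eq_zero_of_abs_sub_le ?_ h1 h2)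
    have : (i : ℕ) ≠ j := fun h => hij (Fin.ext h)
    rw [le_abs]; omega
  · intro i j hij
    refine Set.disjoint_left.mpr fun g h1 h2 =>
      col_ne_zero g (eq_zero_of_abs_sub_le ?_ (le_of_lt h1) (le_of_lt h2))
    have : (i : ℕ) ≠ j := fun h => hij (Fin.ext h)
    rw [le_abs]; omega
  · intro i j
    refine Set.disjoint_left.mpr fun g h1 h2 =>
      col_ne_zero g (eq_zero_of_abs_sub_le ?_ h1 (le_of_lt h2))
    rw [le_abs]; omega
  · rintro i _ ⟨g, hg, rfl⟩
    have hg' : |g.1 1 0| ≤ |g.1 0 0 - (6 * (i : ℕ)) * g.1 1 0| :=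
      not_lt.mp hg
    change |(schottkyGen i * g).1 0 0 - (6 * ((i : ℕ) : ℤ) + 3) * (schottkyGen i * g).1 1 0| ≤
      |(schottkyGen i * g).1 1 0|
    rw [(schottkyGen_mul_col i g).1, (schottkyGen_mul_col i g).2]
    rw [← abs_neg (g.1 1 0)] at hg'
    convert hg' using 2
    ring
  · rintro i _ ⟨g, hg, rfl⟩
    have hg' : |g.1 1 0| < |g.1 0 0 - (6 * (i : ℕ) + 3) * g.1 1 0| :=
      not_le.mp hg
    change |((schottkyGen i)⁻¹ * g).1 0 0 - (6 * ((i : ℕ) : ℤ)) * ((schottkyGen i)⁻¹ * g).1 1 0| <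
      |((schottkyGen i)⁻¹ * g).1 1 0|
    rw [(schottkyGen_inv_mul_col i g).1, (schottkyGen_inv_mul_col i g).2]
    rw [← abs_neg (_ - _)] at hg'
    convert hg' using 2 <;> ring

/-- The integer point attached to an endomorphism `f`: the entries of the matrices `ρ (f (e_j))`. -/
def endoPoint {n : ℕ} (ρ : FreeGroup (Fin n) →* Matrix.SpecialLinearGroup (Fin 2) ℤ)
    (f : FreeGroup (Fin n) →* FreeGroup (Fin n)) : Fin n × Fin 2 × Fin 2 → ℤ :=
  fun q => (ρ (f (FreeGroup.of q.1))).1 q.2.1 q.2.2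

/-- The matrix of `f w` is polynomial in the matrices of the `f (e_j)`; inverses are polynomial
because they are adjugates. -/
lemma exists_word_matrix {n : ℕ} (ρ : FreeGroup (Fin n) →* Matrix.SpecialLinearGroup (Fin 2) ℤ)
    (w : FreeGroup (Fin n)) :
    ∃ M : Matrix (Fin 2) (Fin 2) (MvPolynomial (Fin n × Fin 2 × Fin 2) ℤ),
      ∀ f : FreeGroup (Fin n) →* FreeGroup (Fin n),
        (MvPolynomial.eval (endoPoint ρ f)).mapMatrix M = (ρ (f w)).1 := by
  induction w using FreeGroup.induction_on with
  | C1 => exact ⟨1, fun f => by simp⟩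
  | of j =>
    refine ⟨Matrix.of fun p q => MvPolynomial.X (j, p, q), fun f => ?_⟩
    ext p q
    simp [endoPoint]
  | inv_of j ih =>
    obtain ⟨M, hM⟩ := ih
    refine ⟨M.adjugate, fun f => ?_⟩
    rw [RingHom.map_adjugate, hM, map_inv, map_inv, Matrix.SpecialLinearGroup.coe_inv]
  | mul x y ihx ihy =>
    obtain ⟨M, hM⟩ := ihx
    obtain ⟨N, hN⟩ := ihy
    refine ⟨M * N, fun f => ?_⟩
    rw [map_mul, hM, hN, map_mul, map_mul, Matrix.SpecialLinearGroup.coe_mul]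

/-- Equational Noetherianity: the endomorphisms fixing `A` pointwise are cut out by the conditions
at finitely many elements of `A`. -/
lemma exists_finset_fixing {n : ℕ} (hn : 2 ≤ n) (A : Set (FreeGroup (Fin n))) :
    ∃ s : Finset (FreeGroup (Fin n)), (s : Set (FreeGroup (Fin n))) ⊆ A ∧
      ∀ f : FreeGroup (Fin n) →* FreeGroup (Fin n),
        (∀ a ∈ s, f a = a) → ∀ a ∈ A, f a = a := by
  classical
  set ρ := FreeGroup.lift fun i : Fin n => schottkyGen i with hρ
  have hinj : Function.Injective ρ := lift_schottkyGen_injective hn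
  choose M hM using exists_word_matrix ρ
  let P : FreeGroup (Fin n) × Fin 2 × Fin 2 → MvPolynomial (Fin n × Fin 2 × Fin 2) ℤ :=
    fun q => M q.1 q.2.1 q.2.2 - MvPolynomial.C ((ρ q.1).1 q.2.1 q.2.2)
  have hP : ∀ f q, MvPolynomial.eval (endoPoint ρ f) (P q) =
      (ρ (f q.1)).1 q.2.1 q.2.2 - (ρ q.1).1 q.2.1 q.2.2 := by
    intro f q
    simp only [P, map_sub, MvPolynomial.eval_C, ← hM]
    rfl
  obtain ⟨t, htS, hspan⟩ := (Submodule.fg_span_iff_fg_span_finset_subset (P '' {q | q.1 ∈ A})).mp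
    (IsNoetherian.noetherian
      (Submodule.span (MvPolynomial (Fin n × Fin 2 × Fin 2) ℤ) (P '' {q | q.1 ∈ A})))
  obtain ⟨r, hrA, hrt⟩ := Finset.subset_set_image_iff.mp htS
  refine ⟨r.image Prod.fst, ?_, fun f hf a ha => ?_⟩
  · intro a ha
    obtain ⟨q, hq, rfl⟩ := Finset.mem_image.mp (Finset.mem_coe.mp ha)
    exact hrA hq
  · have hle : Ideal.span (P '' {q | q.1 ∈ A}) ≤
        RingHom.ker (MvPolynomial.eval (endoPoint ρ f)) := by
      change Submodule.span _ _ ≤ _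
      rw [hspan]
      refine Submodule.span_le.mpr fun p hp => ?_
      rw [← hrt] at hp
      obtain ⟨q, hq, rfl⟩ := Finset.mem_image.mp (Finset.mem_coe.mp hp)
      change MvPolynomial.eval _ _ = 0
      rw [hP, hf _ (Finset.mem_image_of_mem _ hq), sub_self]
    apply hinj
    ext i j
    have h := hle (Ideal.subset_span ⟨(a, i, j), ha, rfl⟩)
    rw [RingHom.mem_ker, hP] at h
    exact sub_eq_zero.mp h

/-- Words are terms: the term `t(x̄)` evaluates at `x̄` to the image of `w` under `e_j ↦ x_j`. -/
lemma exists_word_term {n : ℕ} {β : Type} (ι : Fin n → β) (w : FreeGroup (Fin n)) :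
    ∃ t : groupLang.Term β, ∀ v : β → FreeGroup (Fin n),
      t.realize v = FreeGroup.lift (fun j => v (ι j)) w := by
  induction w using FreeGroup.induction_on with
  | C1 => exact ⟨Term.func (L := groupLang) GroupFunc.one ![], fun v => by
      rw [map_one]; rfl⟩
  | of j => exact ⟨Term.var (ι j), fun v => by simp⟩
  | inv_of j ih =>
    obtain ⟨t, ht⟩ := ih
    refine ⟨Term.func (L := groupLang) GroupFunc.inv ![t], fun v => ?_⟩
    rw [map_inv, ← ht]; rfl
  | mul x y ihx ihy =>
    obtain ⟨t, ht⟩ := ihx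
    obtain ⟨u, hu⟩ := ihy
    refine ⟨Term.func (L := groupLang) GroupFunc.mul ![t, u], fun v => ?_⟩
    rw [map_mul, ← ht, ← hu]; rfl

lemma aclIn_mono {L : FirstOrder.Language.{u, v}} {M : Type w} [L.Structure M] {A B : Set M}
    (h : A ⊆ B) : AclIn L A ⊆ AclIn L B := by
  rintro x ⟨m, φ, a, ha, h1, h2⟩
  exact ⟨m, φ, a, fun i => h (ha i), h1, h2⟩

lemma subset_aclIn {L : FirstOrder.Language.{u, v}} {M : Type w} [L.Structure M] (A : Set M) :
    A ⊆ AclIn L A := by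
  intro x hx
  refine ⟨1, Term.equal (Term.var (Sum.inl 0)) (Term.var (Sum.inr 0)), fun _ => x,
    fun _ => hx, by simp [Formula.realize_equal], ?_⟩
  simp [Formula.realize_equal]

/-- If fixing the finite set `s` forces an endomorphism to fix `A`, then parameters in `A` can be
replaced by parameters in `s`. -/
lemma aclIn_subset_of_fixing {n : ℕ} (A : Set (FreeGroup (Fin n)))
    (s : Finset (FreeGroup (Fin n)))
    (hs : ∀ f : FreeGroup (Fin n) →* FreeGroup (Fin n), (∀ a ∈ s, f a = a) → ∀ a ∈ A, f a = a) :
    AclIn groupLang A ⊆ AclIn groupLang (s : Set (FreeGroup (Fin n))) := by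
  rintro x ⟨m, φ, a, ha, hx, hfin⟩
  let c : Fin s.card → FreeGroup (Fin n) := fun i => (s.equivFin.symm i : FreeGroup (Fin n))
  have hc : ∀ b ∈ s, ∃ i, c i = b := fun b hb => ⟨s.equivFin ⟨b, hb⟩, by simp [c]⟩
  -- The variables of the new formula: `y` and the parameters `c`, then the tuple `x̄`.
  choose T hT using exists_word_term (n := n) (β := (Fin 1 ⊕ Fin s.card) ⊕ Fin n) Sum.inr
  let ψ : groupLang.Formula ((Fin 1 ⊕ Fin s.card) ⊕ Fin n) :=
    (Formula.iInf fun i : Fin s.card => Term.equal (T (c i)) (Term.var (Sum.inl (Sum.inr i)))) ⊓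
      BoundedFormula.subst φ
        (Sum.elim (fun k => Term.var (Sum.inl (Sum.inl k))) (fun j => T (a j)))
  let θ : groupLang.Formula (Fin 1 ⊕ Fin s.card) := Formula.iExs (Fin n) ψ
  have hθ : ∀ y : FreeGroup (Fin n), θ.Realize (Sum.elim (fun _ => y) c) ↔
      φ.Realize (Sum.elim (fun _ => y) a) := by
    intro y
    have hψ : ∀ z : Fin n → FreeGroup (Fin n),
        ψ.Realize (Sum.elim (Sum.elim (fun _ => y) c) z) ↔
          (∀ i, FreeGroup.lift z (c i) = c i) ∧
            φ.Realize (Sum.elim (fun _ => y) fun j => FreeGroup.lift z (a j)) := by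
      intro z
      simp only [ψ, Formula.realize_inf, Formula.realize_iInf, Formula.realize_equal, hT,
        Term.realize_var, Sum.elim_inl, Sum.elim_inr]
      refine and_congr Iff.rfl ?_
      rw [Formula.Realize, BoundedFormula.realize_subst, Formula.Realize]
      refine iff_of_eq (congrArg₂ (BoundedFormula.Realize φ) ?_ rfl)
      funext q
      rcases q with k | j <;> simp [hT]
    simp only [θ, Formula.realize_iExs, hψ]
    constructor
    · rintro ⟨z, hz, h⟩
      have hfix := hs (FreeGroup.lift z) (fun b hb => by
        obtain ⟨i, rfl⟩ := hc b hb
        exact hz i)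
      simpa only [hfix _ (ha _)] using h
    · intro h
      have hid : FreeGroup.lift (FreeGroup.of : Fin n → _) = MonoidHom.id _ := by ext; simp
      exact ⟨FreeGroup.of, by simp [hid], by simpa [hid] using h⟩
  refine ⟨s.card, θ, c, fun i => (s.equivFin.symm i).2, (hθ x).mpr hx, ?_⟩
  simpa only [hθ] using hfin

/-- Let `F` be a finitely generated non-abelian free group (here `F_n`,
`n ≥ 2`) and `A` a subgroup of `F` such that `F` is freely indecomposable with respect to
`A`. Then there is a finitely generated subgroup `A₀` of `A` with `A ⊆ acl_F(A₀)`; in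
particular `acl_F(A) = acl_F(A₀)`. -/
theorem acl_equals_acl_of_finitely_generated_subgroup (n : ℕ) (hn : 2 ≤ n)
    (A : Subgroup (FreeGroup (Fin n)))
    (hindec : FreelyIndecomposableWrt (A : Set (FreeGroup (Fin n)))) :
    ∃ A₀ : Subgroup (FreeGroup (Fin n)), A₀ ≤ A ∧ A₀.FG ∧
      (A : Set (FreeGroup (Fin n))) ⊆ AclIn groupLang (A₀ : Set (FreeGroup (Fin n))) ∧
      AclIn groupLang (A : Set (FreeGroup (Fin n))) =
        AclIn groupLang (A₀ : Set (FreeGroup (Fin n))) := by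
  obtain ⟨s, hsA, hs⟩ := exists_finset_fixing hn (A : Set (FreeGroup (Fin n)))
  have hle : Subgroup.closure (s : Set (FreeGroup (Fin n))) ≤ A := (Subgroup.closure_le A).mpr hsA
  have hacl := (aclIn_subset_of_fixing _ s hs).trans
    (aclIn_mono (L := groupLang) (Subgroup.subset_closure (k := (s : Set (FreeGroup (Fin n))))))
  exact ⟨Subgroup.closure s, hle, ⟨s, rfl⟩, (subset_aclIn _).trans hacl,
    hacl.antisymm (aclIn_mono hle)⟩
end

section
/- Let X be a nonempty metric space of infinite diameter (the distance function is unbounded), and let a group G act on X by isometries with only finitely many orbits. Then for every R ≥ 0 and every point x ∈ X, there exists a sequence (h_n)_{n<ω} of elements of G such that the translates h_n · B_R(x) of the ball B_R(x) = {y ∈ X : d(x,y) ≤ R} are pairwise disjoint. -/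
/-! The orbits are finitely many, so there is one constant `M` such that every point of `X` lies
within `M` of the orbit of `x`: a point `g • y` is at distance `dist y x` from `g • x`, and it
suffices to take one representative `y` per orbit. As `X` is unbounded, so is the orbit of `x`
(`exists_lt_dist_smul`). Hence, given finitely many `h ∈ G`, some `g • x` is at distance more than
`2 * R` from all the `h • x`, and then `g • B_R(x)` misses all the `h • B_R(x)`. -/

open Pointwise

universe u v

/-- Under an isometric action with finitely many orbits, the orbit of every point of an unbounded
space is unbounded. -/
theorem exists_lt_dist_smul {X : Type u} [MetricSpace X]
    (hdiam : ∀ C : ℝ, ∃ y z : X, C < dist y z)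
    {G : Type v} [Group G] [MulAction G X]
    (hiso : ∀ (g : G) (y z : X), dist (g • y) (g • z) = dist y z)
    (horb : {S : Set X | ∃ y : X, S = MulAction.orbit G y}.Finite)
    (x : X) (C : ℝ) : ∃ g : G, C < dist x (g • x) := by
  have hM : ∀ᶠ M : ℝ in Filter.atTop, ∀ S ∈ {S : Set X | ∃ y : X, S = MulAction.orbit G y},
      ∀ z ∈ S, ∃ g : G, dist z (g • x) ≤ M := by
    rw [Filter.eventually_all_finite horb]
    rintro _ ⟨y, rfl⟩
    filter_upwards [Filter.eventually_ge_atTop (dist y x)] with M hM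
    rintro _ ⟨g, rfl⟩
    exact ⟨g, (hiso g y x).trans_le hM⟩
  obtain ⟨M, hM⟩ := hM.exists
  by_contra! hC
  obtain ⟨y, z, hyz⟩ := hdiam (2 * (M + C))
  have key : ∀ w : X, dist w x ≤ M + C := by
    intro w
    obtain ⟨g, hg⟩ := hM _ ⟨w, rfl⟩ w (MulAction.mem_orbit_self w)
    linarith [dist_triangle_right w x (g • x), hC g]
  linarith [dist_triangle_right y z x, key y, key z]

/-- Let `X` be a nonempty metric space of infinite diameter (the distance
function is unbounded), and let a group `G` act on `X` by isometries with only finitely many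
orbits. Then for every `R ≥ 0` and every point `x ∈ X`, there is a sequence `(h_n)` of
elements of `G` such that the translates `h_n • B_R(x)` of the closed ball of radius `R`
around `x` are pairwise disjoint. -/
theorem disjoint_translates_of_balls (X : Type u) [MetricSpace X] [Nonempty X]
    (hdiam : ∀ C : ℝ, ∃ y z : X, C < dist y z)
    (G : Type v) [Group G] [MulAction G X]
    (hiso : ∀ (g : G) (y z : X), dist (g • y) (g • z) = dist y z)
    (horb : {S : Set X | ∃ y : X, S = MulAction.orbit G y}.Finite)
    (R : ℝ) (hR : 0 ≤ R) (x : X) :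
    ∃ h : ℕ → G, ∀ i j : ℕ, i ≠ j →
      Disjoint (h i • Metric.closedBall x R) (h j • Metric.closedBall x R) := by
  have hstep : ∀ s : Finset G, (∀ h ∈ s, True) →
      ∃ g : G, True ∧ ∀ h ∈ s, 2 * R < dist (h • x) (g • x) := by
    intro s _
    obtain ⟨C, hC⟩ := (s.image fun h : G => dist x (h • x)).bddAbove
    obtain ⟨g, hg⟩ := exists_lt_dist_smul hdiam hiso horb x (C + 2 * R)
    refine ⟨g, trivial, fun h hh => ?_⟩
    have h1 : dist x (h • x) ≤ C := hC (Finset.mem_coe.2 (Finset.mem_image_of_mem _ hh))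
    linarith [dist_triangle x (h • x) (g • x)]
  have : Std.Symm fun h g : G => 2 * R < dist (h • x) (g • x) :=
    ⟨fun h g hhg => by rwa [dist_comm]⟩
  obtain ⟨h, -, hh⟩ := exists_seq_of_forall_finset_exists' (fun _ : G => True)
    (fun h g : G => 2 * R < dist (h • x) (g • x)) hstep
  refine ⟨h, fun i j hij => Set.disjoint_left.2 ?_⟩
  rintro _ ⟨y, hy, rfl⟩ ⟨z, hz, hzy⟩
  have hij' : 2 * R < dist (h i • x) (h j • x) := hh hij
  have h1 : dist (h i • y) (h i • x) ≤ R := (hiso _ _ _).trans_le hy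
  have h2 : dist (h j • z) (h j • x) ≤ R := (hiso _ _ _).trans_le hz
  have h3 : h j • z = h i • y := hzy
  rw [h3] at h2
  linarith [dist_triangle_left (h i • x) (h j • x) (h i • y)]
end

section
/- In the free group F_4 with basis e_1, e_2, e_3, e_4, let A be the subgroup generated by [e_1,e_2] and [e_3,e_4]. Then every finite tuple b̄ of elements of the subgroup generated by {e_1, e_2} is independent from every finite tuple c̄ of elements of the subgroup generated by {e_3, e_4} over A. -/
/-!
The idea is that over `A` and `e₀, e₁` (the generators are indexed from `0`), the single equation
`[x, y] = [e₂, e₃]` isolates the type of the pair `(e₂, e₃)`: every solution in `F_4` is the image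
of `(e₂, e₃)` under an automorphism fixing `e₀` and `e₁` (`exists_aut_of_commutator_eq`).

To see this, let `[x, y] = [e₂, e₃]` and `H = ⟨x, y⟩`. The loop `[x, y]` in the covering of the
rose with fundamental group `H` is null-homologous, so it crosses each edge algebraically zero
times. Read as `e₂ e₃ e₂⁻¹ e₃⁻¹`, this forces `e₂, e₃ ∈ H` (`mem_of_commutator_eq`). Hence the
endomorphism fixing `e₀, e₁` and sending `e₂, e₃` to `x, y` is surjective, and it is an
automorphism because finitely generated free groups are Hopfian
(`injective_of_surjective_freeGroup`).

For the model theory, let `φ(b, d)` hold with `d` in `A ∪ C`. Then `d = w([e₀, e₁], e₂, e₃)` for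
some words `w`, so `d` satisfies
`ψ(z) : ∃ x y, [x, y] = [e₂, e₃] ∧ z = w([e₀, e₁], x, y)`, a formula over `A`. By the isolation
statement, `F_4` satisfies `∀ z, ψ(z) → φ(b, z)`, and so does every elementary extension `N`.
Every realization in `N` of the type of `d` over `A` satisfies `ψ`, so `b` realizes all the
conjugates of `φ(x, d)` simultaneously, and `φ(x, d)` does not divide over `A`.
-/


open FirstOrder Language

universe u v w

section Core

variable (L : FirstOrder.Language.{u, v})

/-- The tuples `d₁` and `d₂` satisfy the same formulas with parameters from `B`,
i.e. `tp(d₁/B) = tp(d₂/B)`. -/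
def SameTypeOver {N : Type w} [L.Structure N] (B : Set N) {n : ℕ}
    (d₁ d₂ : Fin n → N) : Prop :=
  ∀ (m : ℕ) (φ : L.Formula (Fin n ⊕ Fin m)) (a : Fin m → N), (∀ i, a i ∈ B) →
    (φ.Realize (Sum.elim d₁ a) ↔ φ.Realize (Sum.elim d₂ a))

/-- The family of formulas `φ(x̄, seq i)`, `i < ω`, is `k`-inconsistent:
no `k` formulas of the family are jointly realized in any elementary extension of `N`. -/
def KInconsistent {N : Type w} [L.Structure N] {n m : ℕ}
    (φ : L.Formula (Fin n ⊕ Fin m)) (seq : ℕ → Fin m → N) (k : ℕ) : Prop :=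
  ∀ (P : Type w) [L.Structure P], ∀ _g : N ↪ₑ[L] P, ∀ s : Finset ℕ, s.card = k →
    ¬ ∃ x : Fin n → P, ∀ i ∈ s, φ.Realize (Sum.elim x (fun j => _g (seq i j)))

/-- The formula `φ(x̄, b̄)` divides over `A`: there are `k ≥ 1`, an elementary extension
`N` of `M`, and a sequence of tuples of `N` all of the same type as `b̄` over `A`, such that
the corresponding family of formulas is `k`-inconsistent. -/
def Divides {M : Type w} [L.Structure M] (A : Set M) {n m : ℕ}
    (φ : L.Formula (Fin n ⊕ Fin m)) (b : Fin m → M) : Prop :=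
  ∃ k : ℕ, 1 ≤ k ∧
    ∃ (N : Type w) (iN : L.Structure N),
      haveI := iN
      ∃ (g : M ↪ₑ[L] N) (seq : ℕ → Fin m → N),
        (∀ i : ℕ, SameTypeOver L (Set.image (fun x => g x) A) (seq i) (fun j => g (b j))) ∧
        KInconsistent L φ seq k

/-- Following the paper, `φ(x̄,b̄)` forks over `A` if it divides over `A`. -/
def Forks {M : Type w} [L.Structure M] (A : Set M) {n m : ℕ}
    (φ : L.Formula (Fin n ⊕ Fin m)) (b : Fin m → M) : Prop :=
  Divides L A φ b

/-- The tuple `b̄` is independent from the set `C` over `A` (`b̄ ⫝_A C`):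
no formula of `tp(b̄/A ∪ C)` forks over `A`. -/
def IndepOver {M : Type w} [L.Structure M] (A C : Set M) {n : ℕ} (b : Fin n → M) : Prop :=
  ∀ (m : ℕ) (φ : L.Formula (Fin n ⊕ Fin m)) (c : Fin m → M),
    (∀ i, c i ∈ A ∪ C) → φ.Realize (Sum.elim b c) → ¬ Forks L A φ c

end Core

/-! ### Free groups of finite rank are Hopfian -/

/-- Free groups are residually finite. Given a word for `g`, the finite set `B` consists of the
values of its suffixes. Left multiplication by a generator is a partial injection of `B`; extending
each of these to a permutation of `B` gives an action in which `g` moves `1` to `g`. -/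
theorem exists_finite_quotient {α : Type} (g : FreeGroup α) (hg : g ≠ 1) :
    ∃ (Q : Type) (_ : Group Q) (_ : Finite Q) (f : FreeGroup α →* Q), f g ≠ 1 := by
  classical
  obtain ⟨L, rfl⟩ : ∃ L, FreeGroup.mk L = g := ⟨g.toWord, FreeGroup.mk_toWord⟩
  let B : Finset (FreeGroup α) := (L.tails.map FreeGroup.mk).toFinset
  have hB : ∀ l, l <:+ L → FreeGroup.mk l ∈ B := fun l hl => by
    simp only [B, List.mem_toFinset, List.mem_map, List.mem_tails]
    exact ⟨l, hl, rfl⟩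
  have hσ : ∀ i : α, ∃ σ : Equiv.Perm B, ∀ w w' : B,
      (w' : FreeGroup α) = FreeGroup.of i * w → σ w = w' := by
    intro i
    let e : {w : B // FreeGroup.of i * (w : FreeGroup α) ∈ B} ≃
        {w : B // (FreeGroup.of i)⁻¹ * (w : FreeGroup α) ∈ B} :=
      { toFun := fun w => ⟨⟨_, w.2⟩, by simp⟩
        invFun := fun w => ⟨⟨_, w.2⟩, by simp⟩
        left_inv := fun w => by ext; simp
        right_inv := fun w => by ext; simp }
    refine ⟨e.extendSubtype, fun w w' h => ?_⟩
    rw [e.extendSubtype_apply_of_mem w (by rw [← h]; exact w'.2)]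
    exact Subtype.ext h.symm
  choose σ hσ using hσ
  refine ⟨Equiv.Perm B, inferInstance, inferInstance, FreeGroup.lift σ, fun h1 => hg ?_⟩
  have key : ∀ l (hl : l <:+ L), FreeGroup.lift σ (FreeGroup.mk l) ⟨1, hB [] (List.nil_suffix)⟩
      = ⟨FreeGroup.mk l, hB l hl⟩ := by
    intro l
    induction l with
    | nil => intro hl; rfl
    | cons p l ih =>
      intro hl
      have hl' : l <:+ L := (List.suffix_cons p l).trans hl
      have ih := ih hl'
      obtain ⟨i, s⟩ := p
      have hm : FreeGroup.mk ((i, s) :: l) = FreeGroup.mk [(i, s)] * FreeGroup.mk l := by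
        rw [FreeGroup.mul_mk]; rfl
      have h2 : FreeGroup.lift σ (FreeGroup.mk ((i, s) :: l)) ⟨1, hB [] (List.nil_suffix)⟩
          = FreeGroup.lift σ (FreeGroup.mk [(i, s)]) ⟨FreeGroup.mk l, hB l hl'⟩ := by
        rw [hm, map_mul, Equiv.Perm.mul_apply, ih]
      rw [h2]
      cases s with
      | true =>
        have : FreeGroup.lift σ (FreeGroup.mk [(i, true)]) = σ i := by simp
        rw [this]
        exact hσ i _ _ hm
      | false =>
        have : FreeGroup.lift σ (FreeGroup.mk [(i, false)]) = (σ i)⁻¹ := by simp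
        rw [this, Equiv.Perm.inv_eq_iff_eq]
        refine (hσ i _ _ ?_).symm
        have h3 : FreeGroup.mk [(i, false)] = (FreeGroup.of i)⁻¹ := by
          simp [FreeGroup.of, FreeGroup.inv_mk, FreeGroup.invRev]
        simp only [hm, h3, mul_inv_cancel_left]
  have h2 := key L List.suffix_rfl
  rw [h1] at h2
  exact (congrArg Subtype.val h2).symm

/-- Malcev's argument: precomposition with `θ` is an injective, hence surjective, self-map of the
finite set of homomorphisms to a finite group `Q`, so every such homomorphism kills `ker θ`. -/
theorem injective_of_surjective_freeGroup {α : Type} [Finite α]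
    (θ : FreeGroup α →* FreeGroup α) (hθ : Function.Surjective θ) : Function.Injective θ := by
  rw [injective_iff_map_eq_one]
  intro g hg
  by_contra hne
  obtain ⟨Q, _, _, f, hf⟩ := exists_finite_quotient g hne
  have : Finite (FreeGroup α →* Q) := Finite.of_equiv _ (FreeGroup.lift (α := α) (β := Q))
  have hinj : Function.Injective (fun f : FreeGroup α →* Q => f.comp θ) := fun f₁ f₂ h =>
    (MonoidHom.cancel_right hθ).1 h
  obtain ⟨f', rfl⟩ := Finite.surjective_of_injective hinj f
  exact hf (by simp [hg])

/-! ### Solutions of `[x, y] = [e₂, e₃]` -/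

/-- The permutation `(t, n) ↦ (s • t, n + f t)` of `X × ℤ`. -/
def skewPerm {G X : Type} [Group G] [MulAction G X] (s : G) (f : X → ℤ) :
    Equiv.Perm (X × ℤ) where
  toFun p := (s • p.1, p.2 + f p.1)
  invFun p := (s⁻¹ • p.1, p.2 - f (s⁻¹ • p.1))
  left_inv p := by simp
  right_inv p := by simp

/-- The action of a free group on `X × ℤ` by `skewPerm`s, where `f i t` is the weight of the edge
labelled `i` leaving the vertex `t` of the Schreier graph `X`. The second coordinate records the
total weight of the path followed in the first coordinate. -/
def skewHom {α X : Type} [MulAction (FreeGroup α) X] (f : α → X → ℤ) :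
    FreeGroup α →* Equiv.Perm (X × ℤ) :=
  FreeGroup.lift fun i => skewPerm (FreeGroup.of i) (f i)

theorem skewHom_apply {α X : Type} [MulAction (FreeGroup α) X] (f : α → X → ℤ)
    (g : FreeGroup α) : ∀ t : X, ∃ m : ℤ, ∀ n : ℤ, skewHom f g (t, n) = (g • t, n + m) := by
  induction g using FreeGroup.induction_on with
  | C1 => intro t; exact ⟨0, fun n => by simp⟩
  | of i => intro t; exact ⟨f i t, fun n => by simp [skewHom, skewPerm]⟩
  | inv_of i h =>
    intro t
    refine ⟨-f i ((FreeGroup.of i)⁻¹ • t), fun n => ?_⟩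
    rw [map_inv, Equiv.Perm.inv_eq_iff_eq]
    simp [skewHom, skewPerm]
  | mul g h ihg ihh =>
    intro t
    obtain ⟨m₁, h₁⟩ := ihh t
    obtain ⟨m₂, h₂⟩ := ihg (h • t)
    exact ⟨m₁ + m₂, fun n => by
      rw [map_mul, Equiv.Perm.mul_apply, h₁, h₂, mul_smul, add_assoc]⟩

/-- A commutator of two elements fixing `t` has total weight zero along its path from `t`. -/
theorem skewHom_commutator {α X : Type} [MulAction (FreeGroup α) X] (f : α → X → ℤ)
    (x y : FreeGroup α) (t : X) (hx : x • t = t) (hy : y • t = t) :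
    skewHom f (x * y * x⁻¹ * y⁻¹) (t, 0) = (t, 0) := by
  obtain ⟨m, hm⟩ := skewHom_apply f x t
  obtain ⟨n, hn⟩ := skewHom_apply f y t
  rw [hx] at hm
  rw [hy] at hn
  have hm' : ∀ k, (skewHom f x)⁻¹ (t, k) = (t, k - m) := fun k => by
    rw [Equiv.Perm.inv_eq_iff_eq, hm, sub_add_cancel]
  have hn' : ∀ k, (skewHom f y)⁻¹ (t, k) = (t, k - n) := fun k => by
    rw [Equiv.Perm.inv_eq_iff_eq, hn, sub_add_cancel]
  simp only [map_mul, map_inv, Equiv.Perm.mul_apply, hm, hn, hm', hn']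
  congr 1
  ring

/-- A subgroup `H` with `[x, y] = [eᵢ, eⱼ]` for some `x, y ∈ H` contains `eᵢ` and `eⱼ`: the path
of `[x, y]` from the base point of the Schreier graph of `H` has total weight zero for every
weighting of the edges, so each of the four edges crossed by `eᵢ eⱼ eᵢ⁻¹ eⱼ⁻¹` is crossed in both
directions. -/
theorem mem_of_commutator_eq {α : Type} {i j : α} (hij : i ≠ j) (H : Subgroup (FreeGroup α))
    (x y : FreeGroup α) (hx : x ∈ H) (hy : y ∈ H)
    (h : x * y * x⁻¹ * y⁻¹ =
      FreeGroup.of i * FreeGroup.of j * (FreeGroup.of i)⁻¹ * (FreeGroup.of j)⁻¹) :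
    FreeGroup.of i ∈ H ∧ FreeGroup.of j ∈ H := by
  classical
  set a := FreeGroup.of i with ha
  set b := FreeGroup.of j with hb
  let o : FreeGroup α ⧸ H := ((1 : FreeGroup α) : FreeGroup α ⧸ H)
  have ho : ∀ g : FreeGroup α, g ∈ H ↔ g • o = o := fun g => by
    change g ∈ H ↔ ((g * 1 : FreeGroup α) : FreeGroup α ⧸ H) = ((1 : FreeGroup α) : FreeGroup α ⧸ H)
    rw [eq_comm, QuotientGroup.eq]
    simp
  have hcH : a * b * a⁻¹ * b⁻¹ ∈ H := by
    rw [← h]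
    exact H.mul_mem (H.mul_mem (H.mul_mem hx hy) (H.inv_mem hx)) (H.inv_mem hy)
  -- The path of `a b a⁻¹ b⁻¹` from `o` crosses four edges, whose weights must cancel.
  have key : ∀ f : α → FreeGroup α ⧸ H → ℤ,
      - f j (b⁻¹ • o) - f i (a⁻¹ • b⁻¹ • o) + f j (a⁻¹ • b⁻¹ • o) + f i (b • a⁻¹ • b⁻¹ • o) = 0 := by
    intro f
    have h1 := skewHom_commutator f x y o ((ho x).1 hx) ((ho y).1 hy)
    rw [h] at h1
    have hA : skewHom f a = skewPerm a (f i) := by simp [skewHom, ha]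
    have hB : skewHom f b = skewPerm b (f j) := by simp [skewHom, hb]
    have h2 := congrArg Prod.snd h1
    simp only [map_mul, map_inv, Equiv.Perm.mul_apply, hA, hB] at h2
    have hinv : ∀ (s : FreeGroup α) (f : FreeGroup α ⧸ H → ℤ) (p), (skewPerm s f)⁻¹ p =
      (s⁻¹ • p.1, p.2 - f (s⁻¹ • p.1)) := fun _ _ _ => rfl
    have happ : ∀ (s : FreeGroup α) (f : FreeGroup α ⧸ H → ℤ) (p), (skewPerm s f) p =
      (s • p.1, p.2 + f p.1) := fun _ _ _ => rfl
    simp only [hinv, happ] at h2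
    linarith
  have hbH : b ∈ H := by
    -- The two `i`-edges crossed by the path must coincide.
    have h1 := key fun k t => if k = i ∧ t = a⁻¹ • b⁻¹ • o then 1 else 0
    simp only [hij.symm, false_and, if_false, true_and, if_true] at h1
    have h2 : b • a⁻¹ • b⁻¹ • o = a⁻¹ • b⁻¹ • o := by
      by_contra hne
      rw [if_neg hne] at h1
      norm_num at h1
    have h3 : b * (a * b * a⁻¹ * b⁻¹) ∈ H := by
      rw [ho]
      have := congrArg (fun t => (b * a) • t) h2
      simpa [← mul_smul, mul_assoc] using this
    exact (H.mul_mem_cancel_right hcH).1 h3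
  refine ⟨?_, hbH⟩
  -- The two `j`-edges crossed by the path must coincide.
  have h1 := key fun k t => if k = j ∧ t = b⁻¹ • o then 1 else 0
  simp only [hij, false_and, if_false, true_and, if_true] at h1
  have h2 : a⁻¹ • b⁻¹ • o = b⁻¹ • o := by
    by_contra hne
    rw [if_neg hne] at h1
    norm_num at h1
  have hbo : b⁻¹ • o = o := (ho _).1 (H.inv_mem hbH)
  rw [hbo] at h2
  exact (H.inv_mem_iff).1 ((ho _).2 h2)

/-- The equation `[x, y] = [e₂, e₃]` isolates the type of `(e₂, e₃)` over `e₀, e₁, [e₂, e₃]`: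
automorphisms fixing `e₀` and `e₁` act transitively on its solutions. -/
theorem exists_aut_of_commutator_eq (x y : FreeGroup (Fin 4))
    (h : x * y * x⁻¹ * y⁻¹ = FreeGroup.of 2 * FreeGroup.of 3 *
      (FreeGroup.of 2)⁻¹ * (FreeGroup.of 3)⁻¹) :
    ∃ θ : FreeGroup (Fin 4) ≃* FreeGroup (Fin 4), θ (FreeGroup.of 0) = FreeGroup.of 0 ∧
      θ (FreeGroup.of 1) = FreeGroup.of 1 ∧ θ (FreeGroup.of 2) = x ∧ θ (FreeGroup.of 3) = y := by
  let v : Fin 4 → FreeGroup (Fin 4) := ![FreeGroup.of 0, FreeGroup.of 1, x, y]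
  let θ : FreeGroup (Fin 4) →* FreeGroup (Fin 4) := FreeGroup.lift v
  have hv : ∀ i, θ (FreeGroup.of i) = v i := fun i => FreeGroup.lift_apply_of
  have hmem := mem_of_commutator_eq (by decide) θ.range x y ⟨_, hv 2⟩ ⟨_, hv 3⟩ h
  have hsurj : Function.Surjective θ := by
    rw [← MonoidHom.range_eq_top, eq_top_iff, ← FreeGroup.closure_range_of, Subgroup.closure_le]
    rintro _ ⟨i, rfl⟩
    fin_cases i
    · exact ⟨_, hv 0⟩
    · exact ⟨_, hv 1⟩
    · exact hmem.1
    · exact hmem.2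
  exact ⟨MulEquiv.ofBijective θ ⟨injective_of_surjective_freeGroup θ hsurj, hsurj⟩,
    hv 0, hv 1, hv 2, hv 3⟩

/-! ### Transfer to elementary extensions -/

/-- The operations of `groupLang` suffice to express every group word by a term. -/
theorem exists_term_realize {α : Type} (G : Type) [Group G] (w : FreeGroup α) :
    ∃ t : groupLang.Term α, ∀ v : α → G, t.realize v = FreeGroup.lift v w := by
  have hinv : ∀ t : groupLang.Term α, ∃ t' : groupLang.Term α, ∀ v : α → G,
      t'.realize v = (t.realize v)⁻¹ := fun t =>
    ⟨Term.func (L := groupLang) (l := 1) GroupFunc.inv ![t], fun v => rfl⟩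
  induction w using FreeGroup.induction_on with
  | C1 => exact ⟨Term.func (L := groupLang) (l := 0) GroupFunc.one ![], fun v => by
      rw [map_one]; rfl⟩
  | of i => exact ⟨Term.var i, fun v => by simp⟩
  | inv_of i h =>
    obtain ⟨t, ht⟩ := h
    obtain ⟨t', ht'⟩ := hinv t
    exact ⟨t', fun v => by rw [ht', ht, map_inv]⟩
  | mul g h ihg ihh =>
    obtain ⟨t, ht⟩ := ihg
    obtain ⟨t', ht'⟩ := ihh
    exact ⟨Term.func (L := groupLang) (l := 2) GroupFunc.mul ![t, t'], fun v => by
      rw [map_mul, ← ht, ← ht']; rfl⟩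

/-- A group automorphism, as an automorphism of the structure in the language of groups. -/
def groupLangAut {G : Type} [Group G] (θ : G ≃* G) : G ≃[groupLang] G where
  toEquiv := θ.toEquiv
  map_fun' {n} f x := by
    cases f with
    | mul => exact map_mul θ _ _
    | inv => exact map_inv θ _
    | one => exact map_one θ
  map_rel' {n} r x := r.elim

/-- A formula over `A` satisfied by `c`, all of whose realizations in `M` satisfy `φ(b, z)`,
prevents `φ(x, c)` from dividing over `A`: the tuple `b` realizes all its conjugates. -/
theorem not_forks_of_isolated {L : FirstOrder.Language.{u, v}} {M : Type w} [L.Structure M]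
    (A : Set M) {n m r : ℕ} (φ : L.Formula (Fin n ⊕ Fin m)) (b : Fin n → M) (c : Fin m → M)
    (ψ : L.Formula (Fin m ⊕ Fin r)) (p : Fin r → M) (hp : ∀ i, p i ∈ A)
    (hc : ψ.Realize (Sum.elim c p))
    (hψ : ∀ z : Fin m → M, ψ.Realize (Sum.elim z p) → φ.Realize (Sum.elim b z)) :
    ¬ Forks L A φ c := by
  rintro ⟨k, -, N, iN, g, seq, hseq, hinc⟩
  let χ : L.Formula (Fin n ⊕ Fin r) := Formula.iAlls (Fin m)
    ((ψ.relabel (Sum.elim Sum.inr (Sum.inl ∘ Sum.inr))).imp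
      (φ.relabel (Sum.elim (Sum.inl ∘ Sum.inl) Sum.inr)))
  have hχ : ∀ (K : Type w) [L.Structure K] (b' : Fin n → K) (p' : Fin r → K),
      χ.Realize (Sum.elim b' p') ↔ ∀ z : Fin m → K,
        ψ.Realize (Sum.elim z p') → φ.Realize (Sum.elim b' z) := by
    intro K _ b' p'
    simp only [χ, Formula.realize_iAlls, Formula.realize_imp, Formula.realize_relabel]
    refine forall_congr' fun z => ?_
    have h1 : (fun a => Sum.elim (Sum.elim b' p') z a) ∘
        (Sum.elim Sum.inr (Sum.inl ∘ Sum.inr) : Fin m ⊕ Fin r → (Fin n ⊕ Fin r) ⊕ Fin m)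
        = Sum.elim z p' := by
      ext i; cases i <;> rfl
    have h2 : (fun a => Sum.elim (Sum.elim b' p') z a) ∘
        (Sum.elim (Sum.inl ∘ Sum.inl) Sum.inr : Fin n ⊕ Fin m → (Fin n ⊕ Fin r) ⊕ Fin m)
        = Sum.elim b' z := by
      ext i; cases i <;> rfl
    rw [h1, h2]
  have hN : χ.Realize (Sum.elim (g ∘ b) (g ∘ p)) := by
    rw [← Sum.comp_elim, g.map_formula, hχ]
    exact hψ
  rw [hχ] at hN
  refine hinc N (ElementaryEmbedding.refl L N) (Finset.range k) (Finset.card_range k)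
    ⟨g ∘ b, fun i _ => hN (seq i) ?_⟩
  refine (hseq i r ψ (g ∘ p) fun j => ⟨p j, hp j, rfl⟩).2 ?_
  change ψ.Realize (Sum.elim (g ∘ c) (g ∘ p))
  rw [← Sum.comp_elim, g.map_formula]
  exact hc

/-- In the free group `F_4` with basis `e_1, e_2, e_3, e_4`, let `A` be the
subgroup generated by `[e_1,e_2]` and `[e_3,e_4]`. Then every finite tuple `b̄` of elements of
`⟨e_1, e_2⟩` is independent from every finite tuple `c̄` of elements of `⟨e_3, e_4⟩` over `A`. -/
theorem independence_example_in_F4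
    (k l : ℕ) (b : Fin k → FreeGroup (Fin 4)) (c : Fin l → FreeGroup (Fin 4))
    (hb : ∀ i, b i ∈ Subgroup.closure
      ({FreeGroup.of 0, FreeGroup.of 1} : Set (FreeGroup (Fin 4))))
    (hc : ∀ i, c i ∈ Subgroup.closure
      ({FreeGroup.of 2, FreeGroup.of 3} : Set (FreeGroup (Fin 4)))) :
    IndepOver groupLang
      (↑(Subgroup.closure
        ({FreeGroup.of 0 * FreeGroup.of 1 * (FreeGroup.of 0)⁻¹ * (FreeGroup.of 1)⁻¹,
          FreeGroup.of 2 * FreeGroup.of 3 * (FreeGroup.of 2)⁻¹ * (FreeGroup.of 3)⁻¹}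
          : Set (FreeGroup (Fin 4)))) : Set (FreeGroup (Fin 4)))
      (Set.range c) b := by
  intro m φ d hd hφ
  set e : Fin 4 → FreeGroup (Fin 4) := FreeGroup.of with he
  set u : FreeGroup (Fin 4) := e 0 * e 1 * (e 0)⁻¹ * (e 1)⁻¹ with hu
  set s : FreeGroup (Fin 4) := e 2 * e 3 * (e 2)⁻¹ * (e 3)⁻¹ with hs
  have hmem : ∀ j, d j ∈ Subgroup.closure (Set.range ![u, e 2, e 3]) := by
    have hi : ∀ i : Fin 3, ![u, e 2, e 3] i ∈ Subgroup.closure (Set.range ![u, e 2, e 3]) :=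
      fun i => Subgroup.subset_closure ⟨i, rfl⟩
    intro j
    rcases hd j with h | ⟨i, hi'⟩
    · refine (Subgroup.closure_le _).2 ?_ h
      rintro _ (rfl | rfl)
      · exact hi 0
      · exact mul_mem (mul_mem (mul_mem (hi 1) (hi 2)) (inv_mem (hi 1))) (inv_mem (hi 2))
    · rw [← hi']
      refine (Subgroup.closure_le _).2 ?_ (hc i)
      rintro _ (rfl | rfl)
      · exact hi 1
      · exact hi 2
  have hw : ∀ j, ∃ w : FreeGroup (Fin 3), FreeGroup.lift ![u, e 2, e 3] w = d j := fun j => by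
    have := hmem j
    rwa [← FreeGroup.range_lift_eq_closure] at this
  choose w hw using hw
  choose T hT using fun j => exists_term_realize (FreeGroup (Fin 4)) (w j)
  obtain ⟨K, hK⟩ := exists_term_realize (FreeGroup (Fin 4))
    (FreeGroup.of (0 : Fin 2) * FreeGroup.of 1 * (FreeGroup.of 0)⁻¹ * (FreeGroup.of 1)⁻¹)
  -- `ψ(z; p₀, p₁)` says that `z = w(p₀, x, y)` for some `x, y` with `[x, y] = p₁`.
  let ρ : Fin 3 → (Fin m ⊕ Fin 2) ⊕ Fin 2 := ![Sum.inl (Sum.inr 0), Sum.inr 0, Sum.inr 1]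
  let ψ : groupLang.Formula (Fin m ⊕ Fin 2) := Formula.iExs (Fin 2)
    (Term.equal (K.relabel Sum.inr) (Term.var (Sum.inl (Sum.inr 1))) ⊓
      Formula.iInf fun j : Fin m => Term.equal ((T j).relabel ρ) (Term.var (Sum.inl (Sum.inl j))))
  have hψ : ∀ z : Fin m → FreeGroup (Fin 4), ψ.Realize (Sum.elim z ![u, s]) ↔
      ∃ q : Fin 2 → FreeGroup (Fin 4), q 0 * q 1 * (q 0)⁻¹ * (q 1)⁻¹ = s ∧
        ∀ j, FreeGroup.lift ![u, q 0, q 1] (w j) = z j := by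
    intro z
    simp only [ψ, Formula.realize_iExs, Formula.realize_inf, Formula.realize_iInf,
      Formula.realize_equal, Term.realize_relabel, Term.realize_var, hK, hT]
    refine exists_congr fun q => ?_
    have h1 : Sum.elim (Sum.elim z ![u, s]) q ∘ ρ = ![u, q 0, q 1] := by
      ext i; fin_cases i <;> rfl
    rw [h1]
    simp
  refine not_forks_of_isolated _ φ b d ψ ![u, s] ?_ ?_ ?_
  · intro i
    fin_cases i
    · exact Subgroup.subset_closure (Or.inl rfl)
    · exact Subgroup.subset_closure (Or.inr rfl)
  · exact (hψ d).2 ⟨![e 2, e 3], rfl, hw⟩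
  · intro z hz
    obtain ⟨q, hq, hqz⟩ := (hψ z).1 hz
    obtain ⟨θ, h0, h1, h2, h3⟩ := exists_aut_of_commutator_eq (q 0) (q 1) hq
    have hθb : ∀ i, θ (b i) = b i := by
      intro i
      have : Subgroup.closure {FreeGroup.of 0, FreeGroup.of 1} ≤
          MonoidHom.eqLocus θ.toMonoidHom (MonoidHom.id (FreeGroup (Fin 4))) := by
        rw [Subgroup.closure_le]
        rintro _ (rfl | rfl)
        · exact h0
        · exact h1
      exact this (hb i)
    have hθd : ∀ j, θ (d j) = z j := by
      intro j
      rw [← hqz j, ← hw j]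
      have : θ.toMonoidHom.comp (FreeGroup.lift ![u, e 2, e 3]) =
          FreeGroup.lift ![u, q 0, q 1] := by
        ext i
        fin_cases i
        · simp [hu, he, h0, h1]
        · simp [he, h2]
        · simp [he, h3]
      exact DFunLike.congr_fun this (w j)
    have h := (StrongHomClass.realize_formula (groupLangAut θ) φ (v := Sum.elim b d)).2 hφ
    rw [Sum.comp_elim] at h
    have hb' : groupLangAut θ ∘ b = b := funext hθb
    have hd' : groupLangAut θ ∘ d = z := funext hθd
    rwa [hb', hd'] at h
end

section
/- For every subset A of the free group F_2 of rank 2, either F_2 is freely indecomposable with respect to A, or the algebraic closure acl_{F_2}(A) is a free factor of F_2. -/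
/-!
If `F₂ = G₁ ∗ G₂` with `A ⊆ G₁` and `G₂ ≠ 1`, then `G₁` and `G₂` are free (Nielsen–Schreier) and
the union of their bases is a basis of `F₂`, so it has two elements and `G₁` is trivial or generated
by one basis element `u`. The theorem then says that `acl(A) = 1` when `A ⊆ {1}`, and
`acl(A) = G₁ = ⟨u⟩` otherwise.

* Upper bound. The solution set of a formula over `A` is invariant under conjugation by any `g`
  commuting with `A`. So if `x ∈ acl(A)`, the elements `gⁿxg⁻ⁿ` are not pairwise distinct, some
  `gᵏ` with `k ≠ 0` commutes with `x`, and by uniqueness of roots in free groups so does `g`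
  (`commute_of_mem_acl`). The centralizer of a basis element `u` is `⟨u⟩`
  (`mem_zpowers_of_commute`), which bounds `acl(A)` by `⟨u⟩`; if `A ⊆ {1}`, this applies to both
  standard basis elements, whose cyclic groups meet trivially.
* Lower bound. If `uᵏ ∈ A` with `k ≠ 0`, then `uʲ` is, by uniqueness of roots, the only solution of
  `xᵏ = (uᵏ)ʲ`.
-/

open FirstOrder Language

universe u v w

/-- An automorphism of a group is an automorphism of the corresponding first-order structure. -/
def mulEquivToLEquiv {G : Type w} [Group G] (e : G ≃* G) : groupLang.Equiv G G where
  toEquiv := e.toEquiv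
  map_fun' := by
    intro n f x
    cases f
    · exact map_mul e _ _
    · exact map_inv e _
    · exact map_one e
  map_rel' := by
    intro n r
    exact r.elim

theorem commute_of_mem_acl {G : Type w} [Group G] [IsMulTorsionFree G] {A : Set G} {g x : G}
    (hg : ∀ a ∈ A, Commute g a) (hx : x ∈ AclIn groupLang A) : Commute g x := by
  obtain ⟨m, φ, a, ha, hφ, hfin⟩ := hx
  have key : ∀ n : ℕ, g ^ n * x * (g ^ n)⁻¹ ∈
      {y : G | φ.Realize (Sum.elim (fun _ => y) a)} := by
    intro n
    have h := (StrongHomClass.realize_formula (mulEquivToLEquiv (MulAut.conj (g ^ n))) φ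
      (v := Sum.elim (fun _ => x) a)).2 hφ
    have e : (mulEquivToLEquiv (MulAut.conj (g ^ n))) ∘ (Sum.elim (fun _ => x) a) =
        Sum.elim (fun _ : Fin 1 => g ^ n * x * (g ^ n)⁻¹) a := by
      funext i
      rcases i with i | i
      · rfl
      · change g ^ n * a i * (g ^ n)⁻¹ = a i
        rw [((hg _ (ha i)).pow_left n).eq, mul_inv_cancel_right]
    rw [e] at h
    exact h
  obtain ⟨p, q, hpq, h⟩ : ∃ p q : ℕ, p < q ∧
      g ^ p * x * (g ^ p)⁻¹ = g ^ q * x * (g ^ q)⁻¹ := by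
    by_contra! hne
    refine Set.infinite_of_injective_forall_mem (f := fun n : ℕ => g ^ n * x * (g ^ n)⁻¹) ?_ key hfin
    intro p q h
    rcases lt_trichotomy p q with hl | hl | hl
    · exact (hne p q hl h).elim
    · exact hl
    · exact (hne q p hl h.symm).elim
  obtain ⟨k, rfl⟩ := Nat.exists_eq_add_of_lt hpq
  have h1 : x * g ^ (k + 1) * x⁻¹ = g ^ (k + 1) := by
    have h2 : x = g ^ (k + 1) * x * (g ^ (k + 1))⁻¹ := by
      have h3 : g ^ (p + k + 1) = g ^ p * g ^ (k + 1) := by rw [add_assoc, pow_add]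
      rw [h3] at h
      have h4 : g ^ p * x * (g ^ p)⁻¹ =
          g ^ p * (g ^ (k + 1) * x * (g ^ (k + 1))⁻¹) * (g ^ p)⁻¹ := by
        rw [h]; group
      exact mul_left_cancel (mul_right_cancel h4)
    rw [mul_inv_eq_iff_eq_mul]
    nth_rewrite 1 [h2]
    rw [inv_mul_cancel_right]
  -- Conjugation by `x` fixes a proper power of `g`, hence its unique root `g`.
  have h5 : x * g * x⁻¹ = g := by
    apply pow_left_injective (Nat.succ_ne_zero k)
    change (x * g * x⁻¹) ^ (k + 1) = g ^ (k + 1)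
    rw [conj_pow, h1]
  exact (mul_inv_eq_iff_eq_mul.1 h5).symm

theorem FreeGroup.mem_zpowers_of_commute {α : Type*} (a : α) (x : FreeGroup α)
    (h : Commute (FreeGroup.of a) x) : x ∈ Subgroup.zpowers (FreeGroup.of a) := by
  classical
  suffices H : ∀ L : List (α × Bool), FreeGroup.IsReduced L →
      Commute (FreeGroup.of a) (FreeGroup.mk L) →
      FreeGroup.mk L ∈ Subgroup.zpowers (FreeGroup.of a) by
    have := H x.toWord FreeGroup.isReduced_toWord
    rw [FreeGroup.mk_toWord] at this
    exact this h
  intro L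
  induction L with
  | nil => intro _ _; exact Subgroup.one_mem _
  | cons c L ih =>
    intro hL hc
    obtain ⟨c, b⟩ := c
    by_cases hca : c = a
    · subst hca
      -- A leading letter `a^±1` can be stripped.
      have hm : FreeGroup.mk [(c, b)] ∈ Subgroup.zpowers (FreeGroup.of c) := by
        cases b
        · exact Subgroup.inv_mem _ (Subgroup.mem_zpowers (FreeGroup.of c))
        · exact Subgroup.mem_zpowers (FreeGroup.of c)
      have hs : FreeGroup.mk ((c, b) :: L) = FreeGroup.mk [(c, b)] * FreeGroup.mk L := rfl
      have hcm : Commute (FreeGroup.of c) (FreeGroup.mk [(c, b)]) := by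
        obtain ⟨n, hn⟩ := hm
        rw [← hn]
        exact (Commute.refl _).zpow_right n
      have hcL : Commute (FreeGroup.of c) (FreeGroup.mk L) := by
        have e : FreeGroup.mk L = (FreeGroup.mk [(c, b)])⁻¹ * FreeGroup.mk ((c, b) :: L) := by
          rw [hs, inv_mul_cancel_left]
        rw [e]
        exact hcm.inv_right.mul_right hc
      rw [hs]
      exact Subgroup.mul_mem _ hm (ih (hL.infix (List.suffix_cons _ _).isInfix) hcL)
    · -- Otherwise `of a * x` is reduced as written, so by length `x * of a` is too; the first
      -- letters of the two words differ.
      exfalso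
      have hw : (FreeGroup.mk ((c, b) :: L)).toWord = (c, b) :: L := by
        rw [FreeGroup.toWord_mk, hL.reduce_eq]
      have h1 : (FreeGroup.of a * FreeGroup.mk ((c, b) :: L)).toWord =
          (a, true) :: (c, b) :: L := by
        have hr : FreeGroup.IsReduced ((a, true) :: (c, b) :: L) :=
          FreeGroup.isReduced_cons_cons.2 ⟨fun h => (hca h.symm).elim, hL⟩
        change (FreeGroup.mk ((a, true) :: (c, b) :: L)).toWord = _
        rw [FreeGroup.toWord_mk, hr.reduce_eq]
      have h2 := FreeGroup.toWord_mul_sublist (FreeGroup.mk ((c, b) :: L)) (FreeGroup.of a)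
      rw [← hc.eq, h1, hw, FreeGroup.toWord_of] at h2
      have h3 := h2.eq_of_length (by simp)
      simp only [List.cons_append, List.cons.injEq, Prod.mk.injEq] at h3
      exact hca h3.1.1.symm

theorem FreeGroupBasis.mem_zpowers_of_commute {α : Type*} {G : Type*} [Group G]
    (b : FreeGroupBasis α G) (a : α) (x : G) (h : Commute (b a) x) :
    x ∈ Subgroup.zpowers (b a) := by
  have h1 : Commute (FreeGroup.of a) (b.repr x) := by
    rw [← b.repr_apply_coe]
    exact h.map b.repr
  obtain ⟨n, hn⟩ := FreeGroup.mem_zpowers_of_commute a _ h1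
  refine ⟨n, b.repr.injective ?_⟩
  simpa using hn

/-- The trivial subgroup is a free factor, with complement the whole group. -/
theorem isFreeFactor_bot {G : Type w} [Group G] : IsFreeFactor (⊥ : Subgroup G) := by
  refine ⟨⊤, ?_⟩
  let H : Fin 2 → Subgroup G := ![⊥, ⊤]
  change Function.Bijective (Monoid.CoprodI.lift (fun i => (H i).subtype))
  let s : G →* Monoid.CoprodI (fun i => H i) :=
    (Monoid.CoprodI.of (M := fun i => H i) (i := 1)).comp
      (Subgroup.topEquiv (G := G)).symm.toMonoidHom
  have hs : s.comp (Monoid.CoprodI.lift (fun i => (H i).subtype)) = MonoidHom.id _ := by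
    refine Monoid.CoprodI.ext_hom _ _ fun i => ?_
    ext y
    simp only [MonoidHom.comp_apply, Monoid.CoprodI.lift_of, MonoidHom.id_apply]
    fin_cases i
    · have hy : y = 1 := Subtype.ext (Subgroup.mem_bot.1 y.2)
      subst hy
      simp
    · rfl
  constructor
  · exact Function.LeftInverse.injective (g := s) fun z => DFunLike.congr_fun hs z
  · intro g
    refine ⟨Monoid.CoprodI.of (M := fun i => H i) (i := 1) ⟨g, Subgroup.mem_top g⟩, ?_⟩
    rw [Monoid.CoprodI.lift_of]
    rfl

theorem one_mem_acl {G : Type w} [Group G] (A : Set G) : (1 : G) ∈ AclIn groupLang A := by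
  let t : groupLang.Term (Fin 1 ⊕ Fin 0) := Term.var (Sum.inl 0)
  let o : groupLang.Term (Fin 1 ⊕ Fin 0) := Term.func (GroupFunc.one : groupLang.Functions 0) ![]
  have h : ∀ y : G, (t.equal o).Realize (Sum.elim (fun _ => y) (Fin.elim0 : Fin 0 → G)) ↔
      y = 1 := by
    intro y
    rw [Formula.realize_equal]
    rfl
  refine ⟨0, t.equal o, Fin.elim0, fun i => i.elim0, (h 1).2 rfl, ?_⟩
  simp only [h]
  exact Set.finite_singleton 1

theorem exists_term_zpow {α : Type} (t : groupLang.Term α) (k : ℤ) :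
    ∃ r : groupLang.Term α, ∀ {G : Type w} [Group G] (v : α → G),
      r.realize v = t.realize v ^ k := by
  have hnat : ∀ n : ℕ, ∃ r : groupLang.Term α, ∀ {G : Type w} [Group G] (v : α → G),
      r.realize v = t.realize v ^ n := by
    intro n
    induction n with
    | zero => exact ⟨Term.func (GroupFunc.one : groupLang.Functions 0) ![],
        fun v => (pow_zero _).symm⟩
    | succ n ih =>
      obtain ⟨r, hr⟩ := ih
      refine ⟨Term.func (GroupFunc.mul : groupLang.Functions 2) ![r, t], fun v => ?_⟩
      rw [pow_succ, ← hr v]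
      rfl
  obtain ⟨n, rfl | rfl⟩ := k.eq_nat_or_neg
  · obtain ⟨r, hr⟩ := hnat n
    exact ⟨r, fun v => by rw [hr, zpow_natCast]⟩
  · obtain ⟨r, hr⟩ := hnat n
    refine ⟨Term.func (GroupFunc.inv : groupLang.Functions 1) ![r], fun v => ?_⟩
    rw [zpow_neg, zpow_natCast, ← hr v]
    rfl

theorem zpow_mem_acl {G : Type w} [Group G] [IsMulTorsionFree G] {A : Set G} {u : G} {k : ℤ}
    (hk : k ≠ 0) (hu : u ^ k ∈ A) (j : ℤ) : u ^ j ∈ AclIn groupLang A := by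
  obtain ⟨s, hs⟩ := exists_term_zpow.{w} (Term.var (Sum.inl 0) : groupLang.Term (Fin 1 ⊕ Fin 1)) k
  obtain ⟨t, ht⟩ := exists_term_zpow.{w} (Term.var (Sum.inr 0) : groupLang.Term (Fin 1 ⊕ Fin 1)) j
  have h : ∀ y : G, (s.equal t).Realize (Sum.elim (fun _ => y) (fun _ : Fin 1 => u ^ k)) ↔
      y = u ^ j := by
    intro y
    rw [Formula.realize_equal, hs, ht]
    change y ^ k = (u ^ k) ^ j ↔ _
    rw [zpow_comm, zpow_left_inj hk]
  refine ⟨1, s.equal t, fun _ => u ^ k, fun _ => hu, (h _).2 rfl, ?_⟩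
  simp only [h]
  exact Set.finite_singleton _

theorem acl_of_subset_one {A : Set (FreeGroup (Fin 2))} (hA : A ⊆ {1}) :
    AclIn groupLang A = {1} := by
  refine Set.Subset.antisymm (fun x hx => ?_) (Set.singleton_subset_iff.2 (one_mem_acl A))
  have hc : ∀ i, x ∈ Subgroup.zpowers (FreeGroup.of i) := fun i =>
    FreeGroup.mem_zpowers_of_commute i x <| commute_of_mem_acl
      (fun a ha => by rw [Set.mem_singleton_iff.1 (hA ha)]; exact Commute.one_right _) hx
  obtain ⟨n, hn⟩ := hc 0
  obtain ⟨m, hm⟩ := hc 1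
  -- The exponent sum in the first generator vanishes on powers of the second one.
  let f : FreeGroup (Fin 2) →* Multiplicative ℤ :=
    FreeGroup.lift ![Multiplicative.ofAdd 1, 1]
  have h0 : f x = Multiplicative.ofAdd n := by
    rw [← hn]
    simp [f, ← ofAdd_zsmul]
  have h1 : f x = 1 := by
    rw [← hm]
    simp [f]
  have : n = 0 := by
    rw [h0] at h1
    exact ofAdd_eq_one.1 h1
  subst this
  simpa using hn.symm

/-- A free factor `G₁` of `F₂` with nontrivial complement is trivial or is generated by an
element of a basis of `F₂`. -/
theorem eq_bot_or_zpowers {G₁ G₂ : Subgroup (FreeGroup (Fin 2))}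
    (h : IsFreeProduct ![G₁, G₂]) (h2 : G₂ ≠ ⊥) :
    G₁ = ⊥ ∨ ∃ (α : Type) (b : FreeGroupBasis α (FreeGroup (Fin 2))) (a : α),
      G₁ = Subgroup.zpowers (b a) := by
  let H : Fin 2 → Subgroup (FreeGroup (Fin 2)) := ![G₁, G₂]
  let X : Fin 2 → Type := fun i => IsFreeGroup.Generators (H i)
  let B : ∀ i, FreeGroupBasis (X i) (H i) := fun i => IsFreeGroup.basis (H i)
  let e : Monoid.CoprodI (fun i => H i) ≃* FreeGroup (Fin 2) :=
    MulEquiv.ofBijective (Monoid.CoprodI.lift (fun i => (H i).subtype)) h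
  let b : FreeGroupBasis (Σ i, X i) (FreeGroup (Fin 2)) := (Monoid.CoprodI.FreeGroupBasis.coprodI B).map e
  have hb : ∀ i (x : X i), b ⟨i, x⟩ = (B i x : FreeGroup (Fin 2)) := by
    intro i x
    have : Monoid.CoprodI.FreeGroupBasis.coprodI B ⟨i, x⟩ =
        Monoid.CoprodI.of (M := fun i => H i) (B i x) := by
      exact FreeGroup.lift_apply_of
        (f := fun z : Σ i, X i => Monoid.CoprodI.of (M := fun i => H i) (B z.1 z.2))
    change e (Monoid.CoprodI.FreeGroupBasis.coprodI B ⟨i, x⟩) = _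
    rw [this]
    exact Monoid.CoprodI.lift_of _ _
  have hbot : ∀ i, IsEmpty (X i) → H i = ⊥ := by
    intro i hi
    rw [Subgroup.eq_bot_iff_forall]
    intro x hx
    have := (B i).repr.injective (Subsingleton.elim ((B i).repr ⟨x, hx⟩) ((B i).repr 1))
    exact congrArg Subtype.val this
  let ε : (Σ i, X i) ≃ Fin 2 := Equiv.ofFreeGroupEquiv b.repr.symm
  obtain ⟨y⟩ : Nonempty (X 1) := by
    by_contra hn
    exact h2 (hbot 1 (not_nonempty_iff.1 hn))
  rcases isEmpty_or_nonempty (X 0) with h0 | ⟨⟨x⟩⟩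
  · exact Or.inl (hbot 0 h0)
  · -- Two basis elements of `G₁` and one of `G₂` would be three basis elements of `F₂`.
    have huniq : ∀ z : X 0, z = x := by
      intro z
      by_contra hz
      have n1 : ε ⟨0, z⟩ ≠ ε ⟨0, x⟩ := fun hh => hz (by simpa using ε.injective hh)
      have n2 : ε ⟨0, z⟩ ≠ ε ⟨1, y⟩ := fun hh => by simpa using congrArg Sigma.fst (ε.injective hh)
      have n3 : ε ⟨0, x⟩ ≠ ε ⟨1, y⟩ := fun hh => by simpa using congrArg Sigma.fst (ε.injective hh)
      omega
    refine Or.inr ⟨_, b, ⟨0, x⟩, le_antisymm ?_ ?_⟩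
    · intro g hg
      rw [hb]
      -- With a single generator the group is commutative, so the centralizer lemma applies.
      have hcl : ∀ w : FreeGroup (X 0), Commute (FreeGroup.of x) w := by
        intro w
        induction w using FreeGroup.induction_on with
        | C1 => exact Commute.one_right _
        | of z => rw [huniq z]
        | inv_of z hz => exact hz.inv_right
        | mul p q hp hq => exact hp.mul_right hq
      have hc : Commute (B 0 x) (⟨g, hg⟩ : H 0) := by
        apply (B 0).repr.injective
        rw [map_mul, map_mul, (B 0).repr_apply_coe]
        exact hcl _
      obtain ⟨n, hn⟩ := (B 0).mem_zpowers_of_commute x _ hc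
      exact ⟨n, by simpa using congrArg Subtype.val hn⟩
    · rw [Subgroup.zpowers_le, hb]
      exact (B 0 x).2

/-- For every subset `A` of the free group `F_2` of rank `2`, either `F_2`
is freely indecomposable with respect to `A`, or the algebraic closure `acl_{F_2}(A)` is
(the underlying set of) a free factor of `F_2`. -/
theorem freely_indecomposable_or_acl_free_factor (A : Set (FreeGroup (Fin 2))) :
    FreelyIndecomposableWrt A ∨
      ∃ B : Subgroup (FreeGroup (Fin 2)),
        (B : Set (FreeGroup (Fin 2))) = AclIn groupLang A ∧ IsFreeFactor B := by
  by_cases hA : A ⊆ {1}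
  · exact Or.inr ⟨⊥, by rw [acl_of_subset_one hA, Subgroup.coe_bot], isFreeFactor_bot⟩
  by_cases hI : FreelyIndecomposableWrt A
  · exact Or.inl hI
  refine Or.inr ?_
  simp only [FreelyIndecomposableWrt, not_forall] at hI
  obtain ⟨G₁, G₂, hfree, hsub, h2⟩ := hI
  refine ⟨G₁, ?_, G₂, hfree⟩
  obtain ⟨c, hcA, hc1⟩ := Set.not_subset.1 hA
  rcases eq_bot_or_zpowers hfree h2 with rfl | ⟨α, b, u, rfl⟩
  · exact (hc1 (hsub hcA)).elim
  obtain ⟨k, rfl⟩ := hsub hcA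
  have hk : k ≠ 0 := by
    rintro rfl
    exact hc1 (zpow_zero _)
  refine Set.Subset.antisymm ?_ fun x hx => b.mem_zpowers_of_commute u x (commute_of_mem_acl ?_ hx)
  · rintro _ ⟨j, rfl⟩
    exact zpow_mem_acl hk hcA j
  · intro a ha
    obtain ⟨i, rfl⟩ := hsub ha
    exact (Commute.refl _).zpow_right i
end

section
/- Let F be a finitely generated non-abelian free group which is freely indecomposable with respect to a subgroup A. Then there exists a finitely generated subgroup A_0 of A such that for all finite tuples b̄, c̄ of F, b̄ is independent from c̄ over A if and only if b̄ is independent from c̄ over A_0. -/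
/-! For every subgroup `A` of `F = F_n` there is a finite `S ⊆ A` such that `A` lies in the definable
closure of `S`, and independence over a set only depends on its definable closure
(`indepOver_iff_of_tuplesDefinableFrom`).

Write each `a ∈ A` as a word `w_a(e)` in the basis. Free groups are equationally Noetherian: `F`
embeds into `SL₂(ℤ)` by a ping-pong argument (`exists_injective_freeGroup_to_SL2`), so a system of
equations over `F` translates into polynomial equations over `ℤ`, and by Hilbert's basis theorem
the system `w_a(x) = a`, `a ∈ A`, is equivalent to the finite subsystem given by some finite
`S ⊆ A`. As the `n`-tuples of `F` are the endomorphisms of `F`, this says that every endomorphism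
fixing `S` pointwise fixes `A` pointwise (`exists_finite_subsystem`).

Consequently the formula `∃ x, (⋀_{s ∈ S} w_s(x) = s) ∧ y = w_a(x)` over `S` has `a` as its only
solution (`tuplesDefinableFrom_of_endomorphisms`). The subgroup `A₀` generated by `S` is as
required.
-/

open FirstOrder Language

universe u v w

/-! ### Equational Noetherianity of free groups -/

section Algebra

open Matrix

/-- The Möbius transformation `z ↦ p - 1 / (z - q)`, exchanging the exterior of the unit disc
around `q` with the interior of the unit disc around `p`. -/
def pingPongMatrix (p q : ℤ) : SpecialLinearGroup (Fin 2) ℤ :=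
  ⟨!![p, -(1 + p * q); 1, -q], by simp [Matrix.det_fin_two_of]⟩

lemma coe_pingPongMatrix (p q : ℤ) :
    (pingPongMatrix p q : Matrix (Fin 2) (Fin 2) ℤ) = !![p, -(1 + p * q); 1, -q] := rfl

/-- The unimodular matrices whose first column, read as a point `x / y` of the projective line,
lies in the closed unit disc around `p`. -/
def closedDisc (p : ℤ) : Set (SpecialLinearGroup (Fin 2) ℤ) :=
  {g | |g 0 0 - p * g 1 0| ≤ |g 1 0|}

/-- The open variant of `closedDisc`. -/
def openDisc (q : ℤ) : Set (SpecialLinearGroup (Fin 2) ℤ) :=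
  {g | |g 0 0 - q * g 1 0| < |g 1 0|}

lemma openDisc_subset_closedDisc (q : ℤ) : openDisc q ⊆ closedDisc q :=
  fun g (hg : |g 0 0 - q * g 1 0| < |g 1 0|) => hg.le

lemma disjoint_closedDisc {p q : ℤ} (h : 3 ≤ |p - q|) :
    Disjoint (closedDisc p) (closedDisc q) := by
  rw [Set.disjoint_left]
  intro g hp hq
  simp only [closedDisc, Set.mem_ofPred_eq] at hp hq
  have hdet : g 0 0 * g 1 1 - g 0 1 * g 1 0 = 1 := by
    have := g.det_coe
    rwa [Matrix.det_fin_two] at this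
  have h1 : |p - q| * |g 1 0| ≤ 2 * |g 1 0| := by
    rw [← abs_mul]
    calc |(p - q) * g 1 0| = |(g 0 0 - q * g 1 0) - (g 0 0 - p * g 1 0)| := by congr 1; ring
      _ ≤ |g 0 0 - q * g 1 0| + |g 0 0 - p * g 1 0| := abs_sub _ _
      _ ≤ 2 * |g 1 0| := by linarith
  have h2 : g 1 0 = 0 := by
    rw [← abs_nonpos_iff]
    nlinarith [abs_nonneg (g 1 0)]
  have h3 : g 0 0 = 0 := by simpa [h2] using hp
  simp [h2, h3] at hdet

lemma pingPongMatrix_mul_mem {p q : ℤ} {g : SpecialLinearGroup (Fin 2) ℤ}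
    (hg : g ∉ openDisc q) : pingPongMatrix p q * g ∈ closedDisc p := by
  have h0 : (pingPongMatrix p q * g) 0 0 = p * g 0 0 - (1 + p * q) * g 1 0 := by
    rw [Matrix.SpecialLinearGroup.coe_mul, coe_pingPongMatrix]
    simp [Matrix.mul_apply, Fin.sum_univ_two]; ring
  have h1 : (pingPongMatrix p q * g) 1 0 = g 0 0 - q * g 1 0 := by
    rw [Matrix.SpecialLinearGroup.coe_mul, coe_pingPongMatrix]
    simp [Matrix.mul_apply, Fin.sum_univ_two]; ring
  rw [openDisc, Set.mem_ofPred_eq, not_lt] at hg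
  rw [closedDisc, Set.mem_ofPred_eq, h0, h1]
  calc |p * g 0 0 - (1 + p * q) * g 1 0 - p * (g 0 0 - q * g 1 0)| = |-g 1 0| := by
        congr 1; ring
    _ ≤ _ := by rwa [abs_neg]

lemma pingPongMatrix_inv_mul_mem {p q : ℤ} {g : SpecialLinearGroup (Fin 2) ℤ}
    (hg : g ∉ closedDisc p) : (pingPongMatrix p q)⁻¹ * g ∈ openDisc q := by
  have h0 : ((pingPongMatrix p q)⁻¹ * g) 0 0 = -q * g 0 0 + (1 + p * q) * g 1 0 := by
    rw [Matrix.SpecialLinearGroup.coe_mul, Matrix.SpecialLinearGroup.coe_inv, coe_pingPongMatrix,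
      Matrix.adjugate_fin_two_of]
    simp [Matrix.mul_apply, Fin.sum_univ_two]
  have h1 : ((pingPongMatrix p q)⁻¹ * g) 1 0 = -(g 0 0 - p * g 1 0) := by
    rw [Matrix.SpecialLinearGroup.coe_mul, Matrix.SpecialLinearGroup.coe_inv, coe_pingPongMatrix,
      Matrix.adjugate_fin_two_of]
    simp [Matrix.mul_apply, Fin.sum_univ_two]; ring
  rw [closedDisc, Set.mem_ofPred_eq, not_le] at hg
  rw [openDisc, Set.mem_ofPred_eq, h0, h1, abs_neg]
  calc |-q * g 0 0 + (1 + p * q) * g 1 0 - q * -(g 0 0 - p * g 1 0)| = |g 1 0| := by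
        congr 1; ring
    _ < _ := hg

/-- The Möbius transformations `pingPongMatrix (6 i) (6 i + 3)` play ping-pong on the pairwise
disjoint unit discs around `6 i` and `6 i + 3`. -/
lemma exists_injective_freeGroup_to_SL2 (n : ℕ) (hn : 2 ≤ n) :
    ∃ ρ : FreeGroup (Fin n) →* SpecialLinearGroup (Fin 2) ℤ, Function.Injective ρ := by
  have : Nontrivial (Fin n) := Fin.nontrivial_iff_two_le.2 hn
  let P : Fin n → ℤ := fun i => 6 * (i : ℕ)
  let Q : Fin n → ℤ := fun i => 6 * (i : ℕ) + 3
  have hne : ∀ i j : Fin n, i ≠ j → ((i : ℕ) : ℤ) ≠ ((j : ℕ) : ℤ) := fun i j h h' =>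
    h (Fin.ext (by exact_mod_cast h'))
  refine ⟨FreeGroup.lift fun i => pingPongMatrix (P i) (Q i),
    FreeGroup.injective_lift_of_ping_pong (α := SpecialLinearGroup (Fin 2) ℤ) _
      (fun i => closedDisc (P i)) (fun i => openDisc (Q i)) ?_ ?_ ?_ ?_ ?_ ?_⟩
  · intro i
    refine ⟨pingPongMatrix (P i) (Q i), ?_⟩
    change |P i - P i * 1| ≤ |(1 : ℤ)|
    simp
  · intro i j hij
    apply disjoint_closedDisc
    have := hne i j hij
    simp only [P]
    rw [le_abs]
    omega
  · intro i j hij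
    refine (disjoint_closedDisc ?_).mono (openDisc_subset_closedDisc _)
      (openDisc_subset_closedDisc _)
    have := hne i j hij
    simp only [Q]
    rw [le_abs]
    omega
  · intro i j
    refine (disjoint_closedDisc ?_).mono_right (openDisc_subset_closedDisc _)
    simp only [P, Q]
    rw [le_abs]
    omega
  · rintro i _ ⟨g, hg, rfl⟩
    exact pingPongMatrix_mul_mem hg
  · rintro i _ ⟨g, hg, rfl⟩
    exact pingPongMatrix_inv_mul_mem hg

/-- Equational Noetherianity, in the form of a statement on endomorphisms: the system of equations
`w(x) = w(e)`, `w ∈ A`, in the unknowns `x ∈ Fⁿ` is equivalent to a finite subsystem. The solutions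
become zeros of polynomials over `ℤ` in the matrix entries of the unknowns, so that Hilbert's
basis theorem applies. -/
lemma exists_finite_subsystem (n : ℕ) (hn : 2 ≤ n) (A : Set (FreeGroup (Fin n))) :
    ∃ S : Finset (FreeGroup (Fin n)), ↑S ⊆ A ∧
      ∀ f : FreeGroup (Fin n) →* FreeGroup (Fin n), (∀ a ∈ S, f a = a) → ∀ a ∈ A, f a = a := by
  classical
  obtain ⟨ρ, hρ⟩ := exists_injective_freeGroup_to_SL2 n hn
  let R := MvPolynomial (Fin n × Fin 2 × Fin 2) ℤ
  let X : Fin n → Matrix (Fin 2) (Fin 2) R := fun i => Matrix.of fun j k => MvPolynomial.X (i, j, k)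
  let D : Ideal R := Ideal.span (Set.range fun i => (X i).det - 1)
  let q : R →+* R ⧸ D := Ideal.Quotient.mk D
  -- `R ⧸ D` is the coordinate ring of `SL₂ⁿ`, over which the generic matrices are unimodular.
  let Y : Fin n → SpecialLinearGroup (Fin 2) (R ⧸ D) := fun i => ⟨q.mapMatrix (X i), by
    rw [← RingHom.map_det, ← sub_eq_zero, ← map_one q, ← map_sub]
    exact Ideal.Quotient.eq_zero_iff_mem.2 (Ideal.subset_span ⟨i, rfl⟩)⟩
  let γ : FreeGroup (Fin n) →* SpecialLinearGroup (Fin 2) (R ⧸ D) := FreeGroup.lift Y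
  let E : FreeGroup (Fin n) × Fin 2 × Fin 2 → R ⧸ D := fun t =>
    γ t.1 t.2.1 t.2.2 - ((ρ t.1 t.2.1 t.2.2 : ℤ) : R ⧸ D)
  let T : Set (R ⧸ D) := E '' {t | t.1 ∈ A}
  have : IsNoetherianRing R := inferInstanceAs
    (IsNoetherianRing (MvPolynomial (Fin n × Fin 2 × Fin 2) ℤ))
  have : IsNoetherianRing (R ⧸ D) := inferInstance
  -- Hilbert's basis theorem, with the generators chosen among the given equations.
  obtain ⟨T₀, hT₀, hspan⟩ := (Submodule.fg_span_iff_fg_span_finset_subset (R := R ⧸ D) T).1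
    (IsNoetherian.noetherian _)
  obtain ⟨U, hU, hUT⟩ := Finset.subset_set_image_iff.1 hT₀
  refine ⟨U.image Prod.fst, ?_, ?_⟩
  · intro a ha
    obtain ⟨t, ht, rfl⟩ := Finset.mem_image.1 (Finset.mem_coe.1 ha)
    exact hU ht
  intro f hf a ha
  -- The endomorphism `f` is a point of the variety `SL₂ⁿ`, and `ev` is evaluation at that point.
  let ev₀ : R →+* ℤ := MvPolynomial.eval fun t => ρ (f (FreeGroup.of t.1)) t.2.1 t.2.2
  have hX : ∀ i, ev₀.mapMatrix (X i) = (ρ (f (FreeGroup.of i)) : Matrix (Fin 2) (Fin 2) ℤ) := by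
    intro i
    ext j k
    exact MvPolynomial.eval_X _
  let ev : R ⧸ D →+* ℤ := Ideal.Quotient.lift D ev₀ (by
    intro r hr
    have hD : D ≤ RingHom.ker ev₀ := by
      rw [Ideal.span_le]
      rintro _ ⟨i, rfl⟩
      change ev₀ _ = 0
      rw [map_sub, RingHom.map_det, hX, map_one, sub_eq_zero]
      exact Matrix.SpecialLinearGroup.det_coe _
    exact hD hr)
  have hγ : (SpecialLinearGroup.map ev).comp γ = ρ.comp f := by
    ext1 i
    apply Subtype.ext
    refine Eq.trans ?_ (hX i)
    ext j k
    change ev (FreeGroup.lift Y (FreeGroup.of i) j k) = _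
    rw [FreeGroup.lift_apply_of]
    rfl
  have hE : ∀ t, ev (E t) = ρ (f t.1) t.2.1 t.2.2 - ρ t.1 t.2.1 t.2.2 := by
    intro t
    have := congrArg (fun g : SpecialLinearGroup (Fin 2) ℤ => g t.2.1 t.2.2)
      (DFunLike.congr_fun hγ t.1)
    simp only [MonoidHom.comp_apply] at this
    simp only [E, map_sub, map_intCast, ← this]
    rfl
  have hker : Submodule.span (R ⧸ D) T ≤ RingHom.ker ev := by
    rw [hspan, Submodule.span_le, ← hUT]
    intro r hr
    obtain ⟨t, ht, rfl⟩ := Finset.mem_image.1 (Finset.mem_coe.1 hr)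
    change ev _ = 0
    rw [hE, hf _ (Finset.mem_image_of_mem _ ht), sub_self]
  apply hρ
  apply Matrix.SpecialLinearGroup.ext
  intro j k
  have : ev (E (a, j, k)) = 0 := hker (Submodule.subset_span ⟨(a, j, k), ha, rfl⟩)
  rw [hE] at this
  exact sub_eq_zero.1 this

end Algebra

/-! ### Independence over a definable closure -/

section ModelTheory

open FirstOrder.Language

variable {L : FirstOrder.Language.{u, v}} {M : Type w} [L.Structure M]

/-- Every finite tuple from `A` is defined by a formula with parameters `a₀`: that is,
`A` lies in the definable closure of `a₀`. -/
def TuplesDefinableFrom (L : FirstOrder.Language.{u, v}) {M : Type w} [L.Structure M]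
    (A : Set M) {p : ℕ} (a₀ : Fin p → M) : Prop :=
  ∀ (m : ℕ) (a : Fin m → M), (∀ i, a i ∈ A) →
    ∃ θ : L.Formula (Fin m ⊕ Fin p), ∀ y, θ.Realize (Sum.elim y a₀) ↔ y = a

/-- A formula defining a tuple still defines it in every elementary extension. -/
lemma realize_defining_formula_iff {N : Type w} [L.Structure N] (g : M ↪ₑ[L] N) {m p : ℕ}
    {a₀ : Fin p → M} {a : Fin m → M} {θ : L.Formula (Fin m ⊕ Fin p)}
    (hθ : ∀ y, θ.Realize (Sum.elim y a₀) ↔ y = a) (y : Fin m → N) :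
    θ.Realize (Sum.elim y (fun i => g (a₀ i))) ↔ y = fun i => g (a i) := by
  constructor
  · intro hy
    funext j
    let χ : L.Formula (Fin p ⊕ Fin m) := Formula.iAlls (Fin m)
      ((θ.relabel (Sum.elim Sum.inr (fun i => Sum.inl (Sum.inl i)))).imp
        (Term.equal (Term.var (Sum.inr j)) (Term.var (Sum.inl (Sum.inr j)))))
    have hχ : χ.Realize (Sum.elim a₀ a) := by
      simp only [χ, Formula.realize_iAlls, Formula.realize_imp, Formula.realize_relabel,
        Formula.realize_equal, Term.realize_var]
      intro y h
      have h' : θ.Realize (Sum.elim y a₀) := by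
        convert h using 1
        funext x; cases x <;> rfl
      exact congrFun ((hθ y).1 h') j
    rw [← g.map_formula] at hχ
    simp only [χ, Formula.realize_iAlls, Formula.realize_imp, Formula.realize_relabel,
      Formula.realize_equal, Term.realize_var] at hχ
    refine hχ y ?_
    convert hy using 1
    funext x; cases x <;> rfl
  · rintro rfl
    have h := (hθ a).2 rfl
    rw [← g.map_formula] at h
    convert h using 1
    funext x; cases x <;> rfl

/-- Parameters from `A` can be quantified out of a formula through the formulas defining them,
so that types over `A₀` determine types over `A`. -/
lemma SameTypeOver.of_tuplesDefinableFrom {N : Type w} [L.Structure N] (g : M ↪ₑ[L] N)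
    {A A₀ : Set M} {p : ℕ} {a₀ : Fin p → M} (ha₀ : ∀ i, a₀ i ∈ A₀)
    (hdef : TuplesDefinableFrom L A a₀) {n : ℕ} {d₁ d₂ : Fin n → N}
    (h : SameTypeOver L ((fun x => g x) '' A₀) d₁ d₂) :
    SameTypeOver L ((fun x => g x) '' A) d₁ d₂ := by
  intro m φ a ha
  choose a' ha' haa' using ha
  obtain ⟨θ, hθ⟩ := hdef m a' ha'
  let ψ : L.Formula (Fin n ⊕ Fin p) := Formula.iExs (Fin m)
    (θ.relabel (Sum.elim Sum.inr (fun i => Sum.inl (Sum.inr i))) ⊓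
      φ.relabel (Sum.elim (fun i => Sum.inl (Sum.inl i)) Sum.inr))
  have key : ∀ d : Fin n → N,
      ψ.Realize (Sum.elim d (fun i => g (a₀ i))) ↔ φ.Realize (Sum.elim d a) := by
    intro d
    have e1 : ∀ y : Fin m → N, (Sum.elim (Sum.elim d (fun i => g (a₀ i))) y ∘
        Sum.elim Sum.inr (fun i => Sum.inl (Sum.inr i))) =
        Sum.elim y (fun i => g (a₀ i)) := by
      intro y; funext x; cases x <;> rfl
    have e2 : ∀ y : Fin m → N, (Sum.elim (Sum.elim d (fun i => g (a₀ i))) y ∘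
        Sum.elim (fun i => Sum.inl (Sum.inl i)) Sum.inr) = Sum.elim d y := by
      intro y; funext x; cases x <;> rfl
    simp only [ψ, Formula.realize_iExs, Formula.realize_inf, Formula.realize_relabel, e1, e2,
      realize_defining_formula_iff g hθ]
    rw [exists_eq_left, show (fun i => g (a' i)) = a from funext haa']
  rw [← key, ← key]
  exact h p ψ _ fun i => ⟨a₀ i, ha₀ i, rfl⟩

/-- If `A` lies in the definable closure of `A₀ ⊆ A`, independence over `A` and over `A₀` agree. -/
lemma indepOver_iff_of_tuplesDefinableFrom {A A₀ : Set M} (hsub : A₀ ⊆ A) (hne : A₀.Nonempty)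
    {p : ℕ} {a₀ : Fin p → M} (ha₀ : ∀ i, a₀ i ∈ A₀) (hdef : TuplesDefinableFrom L A a₀)
    (C : Set M) {k : ℕ} (b : Fin k → M) :
    IndepOver L A C b ↔ IndepOver L A₀ C b := by
  classical
  constructor
  · rintro h m φ c hc hφ ⟨r, hr, N, iN, g, seq, hseq, hinc⟩
    exact h m φ c (fun i => (hc i).imp_left fun h => hsub h) hφ
      ⟨r, hr, N, iN, g, seq, fun i => (hseq i).of_tuplesDefinableFrom g ha₀ hdef, hinc⟩
  · rintro h m φ c hc hφ ⟨r, hr, N, iN, g, seq, hseq, hinc⟩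
    obtain ⟨d, hd⟩ := hne
    -- The entries of `c` in `A` are replaced by a formula defining them from `a₀`.
    obtain ⟨θ, hθ⟩ := hdef m (fun j => if c j ∈ A then c j else d) (by
      intro j
      split_ifs with hj
      exacts [hj, hsub hd])
    let mix : Fin m → (Fin k ⊕ Fin (m + p)) ⊕ Fin m := fun j =>
      if c j ∈ A then Sum.inr j else Sum.inl (Sum.inr (Fin.castAdd p j))
    let ψ : L.Formula (Fin k ⊕ Fin (m + p)) := Formula.iExs (Fin m)
      (θ.relabel (Sum.elim Sum.inr (fun i => Sum.inl (Sum.inr (Fin.natAdd m i)))) ⊓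
        φ.relabel (Sum.elim (fun i => Sum.inl (Sum.inl i)) mix))
    have key : ∀ (P : Type w) [L.Structure P] (e : M ↪ₑ[L] P) (x : Fin k → P) (z : Fin m → P),
        ψ.Realize (Sum.elim x (Fin.append z (fun i => e (a₀ i)))) ↔
          φ.Realize (Sum.elim x (fun j => if c j ∈ A then e (c j) else z j)) := by
      intro P _ e x z
      have e1 : ∀ y : Fin m → P, (Sum.elim (Sum.elim x (Fin.append z (fun i => e (a₀ i)))) y ∘
          Sum.elim Sum.inr (fun i => Sum.inl (Sum.inr (Fin.natAdd m i)))) =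
          Sum.elim y (fun i => e (a₀ i)) := by
        intro y; funext t; cases t <;> simp
      have e2 : ∀ y : Fin m → P, (Sum.elim (Sum.elim x (Fin.append z (fun i => e (a₀ i)))) y ∘
          Sum.elim (fun i => Sum.inl (Sum.inl i)) mix) =
          Sum.elim x (fun j => if c j ∈ A then y j else z j) := by
        intro y; funext t
        cases t with
        | inl t => rfl
        | inr t => by_cases ht : c t ∈ A <;> simp [mix, ht]
      simp only [ψ, Formula.realize_iExs, Formula.realize_inf, Formula.realize_relabel, e1, e2,
        realize_defining_formula_iff e hθ]
      rw [exists_eq_left]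
      have e3 : (fun j => if c j ∈ A then e (if c j ∈ A then c j else d) else z j) =
          fun j => if c j ∈ A then e (c j) else z j := by
        funext j; split_ifs <;> rfl
      rw [e3]
    let c' : Fin m → M := fun j => if c j ∈ A then d else c j
    -- Conjugates of `c` over `A` agree with `c` at the entries lying in `A`.
    have hfix : ∀ i j, c j ∈ A → seq i j = g (c j) := by
      intro i j hj
      have := (hseq i 1 (Term.equal (Term.var (Sum.inl j)) (Term.var (Sum.inr 0)))
        (fun _ => g (c j)) (fun _ => ⟨c j, hj, rfl⟩)).2 (by simp)
      simpa using this
    refine h (m + p) ψ (Fin.append c' a₀) ?_ ?_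
      ⟨r, hr, N, iN, g, fun i => Fin.append (fun j => if c j ∈ A then g d else seq i j)
        (fun i => g (a₀ i)), ?_, ?_⟩
    · intro i
      refine Fin.addCases (fun j => ?_) (fun j => ?_) i
      · simp only [Fin.append_left, c']
        split_ifs with hj
        · exact Or.inl hd
        · exact Or.inr ((hc j).resolve_left hj)
      · simp only [Fin.append_right]
        exact Or.inl (ha₀ j)
    · have := key M (ElementaryEmbedding.refl L M) b c'
      simp only [ElementaryEmbedding.refl_apply] at this
      refine this.2 ?_
      convert hφ using 2
      funext j
      simp only [c']
      split_ifs <;> rfl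
    · intro i q χ a ha
      -- Any formula about the new tuples is one about the old tuples with parameters from `A`.
      let s : Fin (m + p) ⊕ Fin q → Fin m ⊕ Fin (1 + p + q) := Sum.elim
        (Fin.append (fun j => if c j ∈ A then Sum.inr (Fin.castAdd q (Fin.castAdd p 0))
          else Sum.inl j) (fun j => Sum.inr (Fin.castAdd q (Fin.natAdd 1 j))))
        (fun j => Sum.inr (Fin.natAdd (1 + p) j))
      let a' : Fin (1 + p + q) → N :=
        Fin.append (Fin.append (fun _ => g d) (fun i => g (a₀ i))) a
      have hs : ∀ t : Fin m → N, Sum.elim t a' ∘ s = Sum.elim (Fin.append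
          (fun j => if c j ∈ A then g d else t j) (fun i => g (a₀ i))) a := by
        intro t; funext x
        cases x with
        | inl x =>
          refine Fin.addCases (fun j => ?_) (fun j => ?_) x
          · by_cases hj : c j ∈ A <;> simp [s, a', hj]
          · simp [s, a']
        | inr x => simp [s, a']
      have h1 := hseq i (1 + p + q) (χ.relabel s) a' (by
        intro x
        refine Fin.addCases (fun x => ?_) (fun x => ?_) x
        · refine Fin.addCases (fun x => ?_) (fun x => ?_) x
          · exact ⟨d, hsub hd, by simp [a']⟩
          · exact ⟨a₀ x, hsub (ha₀ x), by simp [a']⟩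
        · simp only [a', Fin.append_right]
          exact Set.image_mono hsub (ha x))
      rw [Formula.realize_relabel, Formula.realize_relabel, hs, hs] at h1
      rw [h1]
      have e4 : (fun j => g (Fin.append c' a₀ j)) = Fin.append
          (fun j => if c j ∈ A then g d else g (c j)) (fun i => g (a₀ i)) := by
        funext x
        refine Fin.addCases (fun j => ?_) (fun j => ?_) x
        · simp only [Fin.append_left, c']
          split_ifs <;> rfl
        · simp
      rw [e4]
    · rintro P _ e s hs ⟨x, hx⟩
      refine hinc P e s hs ⟨x, fun i hi => ?_⟩
      have h1 := hx i hi
      have e5 : (fun j => e (Fin.append (fun j => if c j ∈ A then g d else seq i j)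
          (fun i => g (a₀ i)) j)) = Fin.append
          (fun j => e (if c j ∈ A then g d else seq i j)) (fun i => (e.comp g) (a₀ i)) := by
        funext x
        refine Fin.addCases (fun j => ?_) (fun j => ?_) x <;> simp
      rw [e5, key P (e.comp g)] at h1
      convert h1 using 2
      funext j
      split_ifs with hj
      · simp [hfix i j hj]
      · rfl

end ModelTheory

/-! ### Definable closure in the free group -/

lemma exists_term_realize_eq_lift {n : ℕ} (G : Type w) [Group G] (x : FreeGroup (Fin n)) :
    ∃ t : groupLang.Term (Fin n), ∀ v : Fin n → G, t.realize v = FreeGroup.lift v x := by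
  induction x using FreeGroup.induction_on with
  | C1 => exact ⟨Term.func (l := 0) GroupFunc.one ![], fun v => by
      rw [map_one]; rfl⟩
  | of i => exact ⟨Term.var i, fun v => by simp⟩
  | inv_of i _ => exact ⟨Term.func (l := 1) GroupFunc.inv ![Term.var i], fun v => by
      rw [map_inv, FreeGroup.lift_apply_of]; rfl⟩
  | mul x y hx hy =>
    obtain ⟨s, hs⟩ := hx
    obtain ⟨t, ht⟩ := hy
    exact ⟨Term.func (l := 2) GroupFunc.mul ![s, t], fun v => by
      rw [map_mul, ← hs, ← ht]; rfl⟩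

/-- If every endomorphism of `F` fixing `a₀` fixes `A`, then a tuple `a = w(e)` of `A` is
defined by the formula `∃ x, a₀ = w₀(x) ∧ y = w(x)`, where `a₀ = w₀(e)`. -/
lemma tuplesDefinableFrom_of_endomorphisms {n : ℕ} {A : Set (FreeGroup (Fin n))} {p : ℕ}
    {a₀ : Fin p → FreeGroup (Fin n)}
    (h : ∀ f : FreeGroup (Fin n) →* FreeGroup (Fin n), (∀ i, f (a₀ i) = a₀ i) →
      ∀ a ∈ A, f a = a) :
    TuplesDefinableFrom groupLang A a₀ := by
  intro m a ha
  choose t ht using exists_term_realize_eq_lift (n := n) (FreeGroup (Fin n))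
  let θ : groupLang.Formula (Fin m ⊕ Fin p) := Formula.iExs (Fin n)
    (Formula.iInf (fun i : Fin p =>
        Term.equal (Term.var (Sum.inl (Sum.inr i))) ((t (a₀ i)).relabel Sum.inr)) ⊓
      Formula.iInf (fun j : Fin m =>
        Term.equal (Term.var (Sum.inl (Sum.inl j))) ((t (a j)).relabel Sum.inr)))
  refine ⟨θ, fun y => ?_⟩
  simp only [θ, Formula.realize_iExs, Formula.realize_inf, Formula.realize_iInf,
    Formula.realize_equal, Term.realize_var, Term.realize_relabel, Sum.elim_comp_inr, ht,
    Sum.elim_inl, Sum.elim_inr]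
  constructor
  · rintro ⟨x, h₀, hy⟩
    funext j
    rw [hy j]
    exact h (FreeGroup.lift x) (fun i => (h₀ i).symm) (a j) (ha j)
  · rintro rfl
    exact ⟨FreeGroup.of, fun _ => (FreeGroup.lift_of_apply _).symm,
      fun _ => (FreeGroup.lift_of_apply _).symm⟩

/-- Let `F` be a finitely generated non-abelian free group (here `F_n`,
`n ≥ 2`) which is freely indecomposable with respect to a subgroup `A`. Then there exists a
finitely generated subgroup `A₀` of `A` such that for all finite tuples `b̄`, `c̄` of `F`,
`b̄` is independent from `c̄` over `A` if and only if `b̄` is independent from `c̄` over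
`A₀`. -/
theorem forking_witnessed_by_finitely_generated_subgroup (n : ℕ) (hn : 2 ≤ n)
    (A : Subgroup (FreeGroup (Fin n)))
    (hindec : FreelyIndecomposableWrt (A : Set (FreeGroup (Fin n)))) :
    ∃ A₀ : Subgroup (FreeGroup (Fin n)), A₀ ≤ A ∧ A₀.FG ∧
      ∀ (k l : ℕ) (b : Fin k → FreeGroup (Fin n)) (c : Fin l → FreeGroup (Fin n)),
        IndepOver groupLang (A : Set (FreeGroup (Fin n))) (Set.range c) b ↔
          IndepOver groupLang (A₀ : Set (FreeGroup (Fin n))) (Set.range c) b := by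
  obtain ⟨S, hSA, hS⟩ := exists_finite_subsystem n hn (A : Set (FreeGroup (Fin n)))
  refine ⟨Subgroup.closure S, (Subgroup.closure_le A).2 hSA, ⟨S, rfl⟩, fun k l b c => ?_⟩
  refine indepOver_iff_of_tuplesDefinableFrom (a₀ := fun i => (S.equivFin.symm i : FreeGroup (Fin n)))
    ((Subgroup.closure_le A).2 hSA) ⟨1, one_mem _⟩
    (fun i => Subgroup.subset_closure (S.equivFin.symm i).2)
    (tuplesDefinableFrom_of_endomorphisms fun f hf => hS f fun a ha => ?_) _ b
  simpa using hf (S.equivFin ⟨a, ha⟩)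
end
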